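/- arXiv:2402.09487 — 2 statements merged into one kernel-verified Lean document; each statement's English description precedes it below -/
import Mathlib

section
/- The j-invariant of an elliptic curve with complex multiplication by an order in an imaginary quadratic field is an algebraic integer. -/
noncomputable section

/-- The lattice `ℤω₁ + ℤω₂ ⊆ ℂ`. -/
def latticeOf (ω₁ ω₂ : ℂ) : AddSubgroup ℂ := AddSubgroup.closure {ω₁, ω₂}

/-- `ω₁, ω₂` form a basis of a lattice in `ℂ` (they are ℝ-linearly independent). -/
def IsLatticeBasis (ω₁ ω₂ : ℂ) : Prop := ω₁ ≠ 0 ∧ (ω₂ / ω₁).im ≠ 0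

/-- Weight `2k`-type Eisenstein series of a lattice. -/
def eisenstein (Λ : AddSubgroup ℂ) (k : ℕ) : ℂ :=
  ∑' w : {w : Λ // (w : ℂ) ≠ 0}, ((w : ℂ)) ^ (-(k : ℤ))

def latG₂ (Λ : AddSubgroup ℂ) : ℂ := 60 * eisenstein Λ 4
def latG₃ (Λ : AddSubgroup ℂ) : ℂ := 140 * eisenstein Λ 6

/-- The `j`-invariant of the complex elliptic curve `ℂ/Λ`. -/
def latticeJ (Λ : AddSubgroup ℂ) : ℂ :=
  1728 * latG₂ Λ ^ 3 / (latG₂ Λ ^ 3 - 27 * latG₃ Λ ^ 2)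

/-- `ℂ/Λ` has complex multiplication: its multiplier ring is strictly larger than `ℤ`. -/
def HasCM (Λ : AddSubgroup ℂ) : Prop :=
  ∃ α : ℂ, α ∉ Set.range ((↑) : ℤ → ℂ) ∧ ∀ z ∈ Λ, α * z ∈ Λ

/-!
Complex multiplication makes the period ratio `τ` a fixed point of an integral matrix `A` of
positive determinant `n`, and after adding a scalar matrix `n` is not a square. With `f = E₄ ^ 3`,
`g = Δ` and `j = f / g`, the form `f · (g ∣ A) - (f ∣ A) · g` vanishes at `τ`, and so does its norm
to level one. The norm is `Δ ^ M · P(j)` for a polynomial `P`, which plays the role of the diagonal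
`Φₙ(X, X)` of the modular polynomial. Up to scalars, every factor of the norm has a `q`-expansion
over the ring of algebraic integers; since `n` is not a square, the two terms of a factor have
different orders at the cusp, so that its lowest coefficient is a unit. Hence, up to a scalar, `P`
has algebraic integer coefficients and a unit as leading coefficient, and `j(τ)` is a root of it.
-/

open UpperHalfPlane
open ModularForm EisensteinSeries Real ConjAct PowerSeries
open Matrix.SpecialLinearGroup (mapGL)
open scoped MatrixGroups Pointwise ArithmeticFunction.sigma

local notation "𝕢" => Function.Periodic.qParam

section Lattice

lemma mem_latticeOf {ω₁ ω₂ z : ℂ} :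
    z ∈ latticeOf ω₁ ω₂ ↔ ∃ a b : ℤ, z = a * ω₁ + b * ω₂ := by
  simp only [latticeOf, AddSubgroup.mem_closure_pair, zsmul_eq_mul, eq_comm]

lemma latticeOf_comm (ω₁ ω₂ : ℂ) : latticeOf ω₁ ω₂ = latticeOf ω₂ ω₁ := by
  rw [latticeOf, latticeOf, Set.pair_comm]

lemma IsLatticeBasis.exists_latticeOf_eq {ω₁ ω₂ : ℂ} (hb : IsLatticeBasis ω₁ ω₂) :
    ∃ (ω : ℂ) (τ : ℍ), ω ≠ 0 ∧ latticeOf ω₁ ω₂ = latticeOf ω (τ * ω) := by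
  obtain ⟨h₁, him⟩ := hb
  rcases him.lt_or_gt with h | h
  · have h₂ : ω₂ ≠ 0 := by rintro rfl; simp at h
    have him' : 0 < (ω₁ / ω₂).im := by
      rw [← inv_div, Complex.inv_im]
      exact div_pos (neg_pos.2 h) (Complex.normSq_pos.2 (div_ne_zero h₂ h₁))
    exact ⟨ω₂, ⟨_, him'⟩, h₂, by rw [latticeOf_comm, coe_mk, div_mul_cancel₀ _ h₂]⟩
  · exact ⟨ω₁, ⟨_, h⟩, h₁, by rw [coe_mk, div_mul_cancel₀ _ h₁]⟩

lemma bijective_latticeOf_combination {ω : ℂ} (hω : ω ≠ 0) (τ : ℍ) :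
    Function.Bijective fun v : Fin 2 → ℤ ↦
      (⟨((v 0 : ℂ) * τ + v 1) * ω, mem_latticeOf.2 ⟨v 1, v 0, by ring⟩⟩ : latticeOf ω (τ * ω)) := by
  constructor
  · intro v w hvw
    have h : (v 0 * τ + v 1 : ℂ) = w 0 * τ + w 1 :=
      mul_right_cancel₀ hω (congrArg Subtype.val hvw)
    have h0 : v 0 = w 0 := by simpa [τ.im_ne_zero] using congrArg Complex.im h
    have h1 : v 1 = w 1 := by
      rw [h0] at h
      exact_mod_cast add_left_cancel h
    ext i
    fin_cases i <;> assumption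
  · rintro ⟨z, hz⟩
    obtain ⟨a, b, rfl⟩ := mem_latticeOf.1 hz
    exact ⟨![b, a], Subtype.ext (by simp; ring)⟩

lemma eisenstein_eq_tsum (Λ : AddSubgroup ℂ) {k : ℕ} (hk : k ≠ 0) :
    eisenstein Λ k = ∑' w : Λ, (w : ℂ) ^ (-(k : ℤ)) := by
  refine tsum_subtype_eq_of_support_subset (f := fun w : Λ ↦ (w : ℂ) ^ (-(k : ℤ)))
    (s := {w : Λ | (w : ℂ) ≠ 0}) fun w hw hw0 ↦ hw ?_
  simp only [hw0, zero_zpow _ (neg_ne_zero.2 (Nat.cast_ne_zero.2 hk))]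

lemma eisenstein_latticeOf {ω : ℂ} (hω : ω ≠ 0) (τ : ℍ) {k : ℕ} (hk : 3 ≤ k) :
    eisenstein (latticeOf ω (τ * ω)) k = 2 * riemannZeta k * E hk τ / ω ^ k := by
  have hE : E hk τ = (1 / 2 : ℂ) * eisensteinSeries (N := 1) 0 k τ := rfl
  calc eisenstein (latticeOf ω (τ * ω)) k
      = ∑' v : Fin 2 → ℤ, (((v 0 : ℂ) * τ + v 1) * ω) ^ (-(k : ℤ)) := by
        rw [eisenstein_eq_tsum _ (by lia),
          ← (Equiv.ofBijective _ (bijective_latticeOf_combination hω τ)).tsum_eq]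
        rfl
    _ = (ω ^ k)⁻¹ * ∑' v : Fin 2 → ℤ, eisSummand k v τ := by
        rw [← tsum_mul_left]
        refine tsum_congr fun v ↦ ?_
        rw [mul_zpow, zpow_neg ω, zpow_natCast, mul_comm]
        rfl
    _ = 2 * riemannZeta k * E hk τ / ω ^ k := by
        rw [tsum_eisSummand_eq_riemannZeta_mul_eisensteinSeries hk, hE]
        ring

lemma bernoulli_six : bernoulli 6 = 1 / 42 := by decide +kernel

lemma riemannZeta_six : riemannZeta 6 = π ^ 6 / 945 := by
  have hζ := riemannZeta_two_mul_nat (k := 3) (by norm_num)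
  norm_num [bernoulli_six, Nat.factorial] at hζ
  rw [hζ]
  ring

lemma latG₂_latticeOf {ω : ℂ} (hω : ω ≠ 0) (τ : ℍ) :
    latG₂ (latticeOf ω (τ * ω)) = 4 / 3 * π ^ 4 * E₄ τ / ω ^ 4 := by
  rw [latG₂, eisenstein_latticeOf hω τ (k := 4) (by norm_num), Nat.cast_ofNat, riemannZeta_four]
  ring

lemma latG₃_latticeOf {ω : ℂ} (hω : ω ≠ 0) (τ : ℍ) :
    latG₃ (latticeOf ω (τ * ω)) = 8 / 27 * π ^ 6 * E₆ τ / ω ^ 6 := by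
  rw [latG₃, eisenstein_latticeOf hω τ (k := 6) (by norm_num), Nat.cast_ofNat, riemannZeta_six]
  ring

/-- Klein's `j`-invariant on the upper half-plane, normalised so that its `q`-expansion starts with
`1 / q`. -/
def kleinJ (τ : ℍ) : ℂ := E₄ τ ^ 3 / discriminant τ

lemma latticeJ_latticeOf {ω : ℂ} (hω : ω ≠ 0) (τ : ℍ) :
    latticeJ (latticeOf ω (τ * ω)) = kleinJ τ := by
  have hπ : (π : ℂ) ≠ 0 := Complex.ofReal_ne_zero.2 pi_ne_zero
  have hc : 64 / 27 * (π : ℂ) ^ 12 / ω ^ 12 ≠ 0 := by simp [hπ, hω]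
  rw [latticeJ, kleinJ, latG₂_latticeOf hω, latG₃_latticeOf hω,
    discriminant_eq_E₄_cube_sub_E₆_sq τ]
  calc _ = 64 / 27 * (π : ℂ) ^ 12 / ω ^ 12 * (1728 * E₄ τ ^ 3) /
        (64 / 27 * (π : ℂ) ^ 12 / ω ^ 12 * (E₄ τ ^ 3 - E₆ τ ^ 2)) := by ring
    _ = _ := by rw [mul_div_mul_left _ _ hc, div_div_eq_mul_div, mul_comm]

lemma discrim_neg_of_fixes {a b c d : ℝ} (hc : c ≠ 0) {τ : ℍ}
    (hfix : (a * τ + b : ℂ) = (c * τ + d) * τ) : (d - a) ^ 2 + 4 * b * c < 0 := by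
  have hy := τ.im_pos
  have hre : a * τ.re + b = (c * τ.re + d) * τ.re - c * τ.im * τ.im := by
    simpa using congrArg Complex.re hfix
  have him : a * τ.im = (c * τ.re + d) * τ.im + c * τ.im * τ.re := by
    simpa using congrArg Complex.im hfix
  have ha : a = 2 * c * τ.re + d := mul_right_cancel₀ hy.ne' (by linear_combination him)
  have key : (d - a) ^ 2 + 4 * b * c = -(4 * c ^ 2 * τ.im ^ 2) := by
    rw [ha] at hre ⊢
    linear_combination 4 * c * hre
  rw [key, neg_lt_zero]
  positivity

/-- Four times the determinant is `t ^ 2 + D` with `t` the trace and `D > 0` fixed; for `t > D`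
this lies strictly between the squares of `t` and `t + 1`. -/
lemma exists_add_scalar_det_not_isSquare {a b c d : ℤ} (h : (d - a) ^ 2 + 4 * b * c < 0) :
    ∃ n : ℤ, 0 < (a + n) * (d + n) - b * c ∧ ¬ IsSquare ((a + n) * (d + n) - b * c) := by
  set D : ℤ := -((d - a) ^ 2 + 4 * b * c) with hD
  obtain ⟨n, hn⟩ : ∃ n : ℤ, D < 2 * n + a + d := ⟨D + |a + d|, by
    have := neg_abs_le (a + d)
    have := abs_nonneg (a + d)
    linarith⟩
  have hdet : 4 * ((a + n) * (d + n) - b * c) = (2 * n + a + d) ^ 2 + D := by rw [hD]; ring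
  refine ⟨n, by nlinarith, ?_⟩
  rintro ⟨s, hs⟩
  have hsq : (2 * |s|) ^ 2 = (2 * n + a + d) ^ 2 + D := by
    rw [← hdet, hs, mul_pow, sq_abs]
    ring
  have hlt : 2 * n + a + d < 2 * |s| := by nlinarith [abs_nonneg s]
  nlinarith

lemma HasCM.exists_fixing_matrix {ω : ℂ} (hω : ω ≠ 0) {τ : ℍ}
    (hcm : HasCM (latticeOf ω (τ * ω))) :
    ∃ a b c d : ℤ, c ≠ 0 ∧ (a * τ + b : ℂ) = (c * τ + d) * τ := by
  obtain ⟨α, hα, hmul⟩ := hcm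
  obtain ⟨d, c, hdc⟩ := mem_latticeOf.1 (hmul ω (mem_latticeOf.2 ⟨1, 0, by simp⟩))
  obtain ⟨b, a, hba⟩ := mem_latticeOf.1 (hmul (τ * ω) (mem_latticeOf.2 ⟨0, 1, by simp⟩))
  have hα' : α = c * τ + d := mul_right_cancel₀ hω (by linear_combination hdc)
  refine ⟨a, b, c, d, ?_, mul_right_cancel₀ hω ?_⟩
  · rintro rfl
    exact hα ⟨d, by simp [hα']⟩
  · rw [← hα']
    linear_combination -hba

lemma HasCM.exists_fixing_matrix_not_isSquare {ω : ℂ} (hω : ω ≠ 0) {τ : ℍ}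
    (hcm : HasCM (latticeOf ω (τ * ω))) :
    ∃ a b c d : ℤ, 0 < a * d - b * c ∧ ¬ IsSquare (a * d - b * c) ∧
      (a * τ + b : ℂ) = (c * τ + d) * τ := by
  obtain ⟨a, b, c, d, hc, hfix⟩ := hcm.exists_fixing_matrix hω
  have hdisc : (d - a) ^ 2 + 4 * b * c < 0 := by
    exact_mod_cast discrim_neg_of_fixes (a := a) (b := b) (c := c) (d := d)
      (Int.cast_ne_zero.2 hc) (by exact_mod_cast hfix)
  obtain ⟨n, hpos, hsq⟩ := exists_add_scalar_det_not_isSquare hdisc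
  exact ⟨a + n, b, c, d + n, hpos, hsq, by push_cast; linear_combination hfix⟩

end Lattice

section PowerSeries

variable {R S : Type*} [CommRing R] [CommRing S]

lemma isUnit_powerSeries_of_constantCoeff_eq_one {F : R⟦X⟧} (hF : constantCoeff F = 1) :
    IsUnit F :=
  isUnit_iff_constantCoeff.2 (hF ▸ isUnit_one)

lemma associated_X_of_coeff {F : R⟦X⟧} (h0 : constantCoeff F = 0) (h1 : coeff 1 F = 1) :
    Associated X F := by
  obtain ⟨U, rfl⟩ := X_dvd_iff.2 h0
  rw [← zero_add 1, coeff_succ_X_mul, coeff_zero_eq_constantCoeff] at h1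
  exact associated_mul_unit_right X U (isUnit_powerSeries_of_constantCoeff_eq_one h1)

lemma associated_X_pow_expand {k : ℕ} (hk : k ≠ 0) {F : R⟦X⟧} (hF : Associated X F) :
    Associated (X ^ k) (expand k hk F) :=
  expand_X (R := R) k hk ▸ hF.map (expand k hk)

lemma associated_X_rescale {a : R} (ha : IsUnit a) {F : R⟦X⟧} (hF : Associated X F) :
    Associated X (rescale a F) := by
  refine Associated.trans ?_ (hF.map (rescale a))
  rw [rescale_X]
  exact (associated_unit_mul_left X _ (ha.map C)).symm

lemma associated_X_pow_sub_of_lt {F G : R⟦X⟧} {m n : ℕ} (hF : Associated (X ^ m) F)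
    (hG : Associated (X ^ n) G) (hmn : m < n) : Associated (X ^ m) (F - G) := by
  obtain ⟨U, rfl⟩ := hF
  obtain ⟨V, rfl⟩ := hG
  obtain ⟨k, rfl⟩ := Nat.exists_eq_add_of_lt hmn
  have hU : IsUnit ((U : R⟦X⟧) - X ^ (k + 1) * (V : R⟦X⟧)) := by
    rw [isUnit_iff_constantCoeff]
    simpa using isUnit_iff_constantCoeff.1 U.isUnit
  convert associated_mul_unit_right (X ^ m) _ hU using 1
  ring

lemma exists_associated_X_pow_sub {F G : R⟦X⟧} {m n : ℕ} (hF : Associated (X ^ m) F)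
    (hG : Associated (X ^ n) G) (hmn : m ≠ n) : ∃ l, Associated (X ^ l) (F - G) := by
  rcases hmn.lt_or_gt with h | h
  · exact ⟨m, associated_X_pow_sub_of_lt hF hG h⟩
  · exact ⟨n, neg_sub G F ▸ (associated_X_pow_sub_of_lt hG hF h).neg_right⟩

lemma exists_associated_X_pow_prod {ι : Type*} {s : Finset ι} {F : ι → R⟦X⟧}
    (h : ∀ i ∈ s, ∃ n, Associated (X ^ n) (F i)) : ∃ n, Associated (X ^ n) (∏ i ∈ s, F i) := by
  refine Finset.prod_induction F (fun G ↦ ∃ n, Associated (X ^ n) G) ?_ ⟨0, by simp⟩ h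
  rintro G H ⟨m, hG⟩ ⟨n, hH⟩
  exact ⟨m + n, pow_add (X : R⟦X⟧) m n ▸ hG.mul_mul hH⟩

lemma associated_X_pow_of_mul_right [IsDomain R] {D G : R⟦X⟧} {m n : ℕ}
    (hD : Associated (X ^ m) D) (hDG : Associated (X ^ n) (D * G)) :
    Associated (X ^ (n - m)) G := by
  have hmn : m ≤ n := by
    rw [← pow_dvd_pow_iff (X_ne_zero : (X : R⟦X⟧) ≠ 0) X_prime.not_isUnit, hDG.dvd_iff_dvd_right]
    exact hD.dvd.mul_right G
  refine Associated.of_mul_left ?_ hD (pow_ne_zero m X_ne_zero)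
  rwa [← pow_add, Nat.add_sub_cancel' hmn]

lemma isUnit_of_associated_X_pow_C [Nontrivial R] {a : R} {n : ℕ}
    (h : Associated (X ^ n) (C a)) : IsUnit a := by
  obtain ⟨U, hU⟩ := h
  have hUn := congrArg (coeff n) hU
  rw [coeff_X_pow_mul', if_pos le_rfl, Nat.sub_self, coeff_zero_eq_constantCoeff_apply,
    coeff_C] at hUn
  have hunit := isUnit_iff_constantCoeff.1 U.isUnit
  split_ifs at hUn
  · exact hUn ▸ hunit
  · exact absurd hUn hunit.ne_zero

/-- Division by a series with unit leading coefficient does not enlarge the coefficient ring. -/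
lemma exists_mul_eq_of_map_mul_eq {φ : R →+* S} (hφ : Function.Injective φ) {D F : R⟦X⟧} {n : ℕ}
    (hD : Associated (X ^ n) D) {g : S⟦X⟧} (h : D.map φ * g = F.map φ) :
    ∃ G : R⟦X⟧, G.map φ = g ∧ D * G = F := by
  obtain ⟨U, rfl⟩ := hD
  rw [map_mul, map_pow, map_X, mul_assoc] at h
  obtain ⟨H, rfl⟩ : X ^ n ∣ F := by
    rw [X_pow_dvd_iff]
    intro i hi
    apply hφ
    rw [← coeff_map, ← h, map_zero, coeff_X_pow_mul', if_neg hi.not_ge]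
  rw [map_mul, map_pow, map_X] at h
  refine ⟨↑U⁻¹ * H, ?_, by rw [mul_assoc, U.mul_inv_cancel_left]⟩
  rw [map_mul, ← X_pow_mul_cancel h, ← mul_assoc, ← map_mul, U.inv_mul, map_one, one_mul]

end PowerSeries

section QExpansion

variable {R : Type*} [CommRing R] [Algebra R ℂ] {N : ℕ} {f g : ℍ → ℂ} {F G : R⟦X⟧}

/-- The function `f` on the upper half-plane is the sum of the power series `F` in
`exp (2πiτ / N)`. The coefficients are taken in an arbitrary ring `R` over `ℂ` in order to keep
track of their integrality. -/
def HasQExp (N : ℕ) (f : ℍ → ℂ) (F : R⟦X⟧) : Prop :=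
  ∀ τ : ℍ, HasSum (fun n ↦ algebraMap R ℂ (coeff n F) * 𝕢 N τ ^ n) (f τ)

namespace HasQExp

lemma sub (hf : HasQExp N f F) (hg : HasQExp N g G) : HasQExp N (f - g) (F - G) := fun τ ↦ by
  simpa [sub_mul] using (hf τ).sub (hg τ)

lemma mul (hf : HasQExp N f F) (hg : HasQExp N g G) : HasQExp N (f * g) (F * G) := fun τ ↦ by
  have hcoeff (n : ℕ) : algebraMap R ℂ (coeff n (F * G)) * 𝕢 N τ ^ n =
      ∑ ij ∈ Finset.HasAntidiagonal.antidiagonal n,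
        (algebraMap R ℂ (coeff ij.1 F) * 𝕢 N τ ^ ij.1) *
          (algebraMap R ℂ (coeff ij.2 G) * 𝕢 N τ ^ ij.2) := by
    rw [coeff_mul, map_sum, Finset.sum_mul]
    refine Finset.sum_congr rfl fun ij hij ↦ ?_
    rw [← Finset.HasAntidiagonal.mem_antidiagonal.1 hij, pow_add, map_mul]
    ring
  have hF := (hf τ).summable.norm
  have hG := (hg τ).summable.norm
  simp only [hcoeff, Pi.mul_apply, ← (hf τ).tsum_eq, ← (hg τ).tsum_eq]
  rw [tsum_mul_tsum_eq_tsum_sum_antidiagonal_of_summable_norm hF hG]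
  exact (summable_norm_sum_mul_antidiagonal_of_summable_norm hF hG).of_norm.hasSum

lemma const (N : ℕ) (a : R) : HasQExp N (Function.const ℍ (algebraMap R ℂ a)) (C a) := fun τ ↦ by
  simpa using hasSum_single (f := fun n ↦ algebraMap R ℂ (coeff n (C a)) * 𝕢 N τ ^ n) 0
    fun n hn ↦ by simp [coeff_C, hn]

lemma one : HasQExp N 1 (1 : R⟦X⟧) := by
  simpa using! const N (1 : R)

lemma prod {ι : Type*} {s : Finset ι} {f : ι → ℍ → ℂ} {F : ι → R⟦X⟧}
    (h : ∀ i ∈ s, HasQExp N (f i) (F i)) : HasQExp N (∏ i ∈ s, f i) (∏ i ∈ s, F i) := by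
  classical
  induction s using Finset.induction_on with
  | empty => simpa using one
  | insert i s hi ih =>
    rw [Finset.prod_insert hi, Finset.prod_insert hi]
    exact (h i (by simp)).mul (ih fun j hj ↦ h j (by simp [hj]))

lemma pow (hf : HasQExp N f F) (n : ℕ) : HasQExp N (f ^ n) (F ^ n) := by
  simpa using prod (s := Finset.range n) fun _ _ ↦ hf

lemma comp_expand_rescale {M k : ℕ} (hk : k ≠ 0) {ζ : R} (hf : HasQExp N f F) {φ : ℍ → ℍ}
    (hφ : ∀ τ : ℍ, 𝕢 N (φ τ) = algebraMap R ℂ ζ * 𝕢 M τ ^ k) :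
    HasQExp M (f ∘ φ) (expand k hk (rescale ζ F)) := fun τ ↦ by
  refine ((mul_right_injective₀ hk).hasSum_iff fun n hn ↦ ?_).1 ((hf (φ τ)).congr_fun fun n ↦ ?_)
  · have hkn : ¬ k ∣ n := fun ⟨m, hm⟩ ↦ hn ⟨m, hm.symm⟩
    rw [coeff_expand_of_not_dvd _ _ _ hkn, map_zero, zero_mul]
  · rw [Function.comp_apply, coeff_expand_mul, coeff_rescale, hφ, mul_pow, pow_mul, map_mul,
      map_pow]
    ring

lemma expand_of_one (hN : N ≠ 0) (hf : HasQExp 1 f F) : HasQExp N f (expand N hN F) := by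
  have hq (τ : ℍ) : 𝕢 (1 : ℕ) τ = algebraMap R ℂ 1 * 𝕢 N τ ^ N := by
    have hN' : (N : ℂ) ≠ 0 := Nat.cast_ne_zero.2 hN
    rw [map_one, one_mul, Function.Periodic.qParam, Function.Periodic.qParam,
      ← Complex.exp_nat_mul]
    congr 1
    push_cast
    field_simp
  simpa using! hf.comp_expand_rescale hN (φ := id) hq

end HasQExp

lemma natCast_mem_strictPeriods_SL (N : ℕ) : (N : ℝ) ∈ (𝒮ℒ).strictPeriods := by
  simpa using AddSubgroup.mem_zmultiples_iff.2 ⟨N, by simp⟩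

lemma hasQExp_iff_qExpansion_eq (hN : N ≠ 0) {k : ℤ} (f : ModularForm 𝒮ℒ k) :
    HasQExp N f F ↔ qExpansion N f = F.map (algebraMap R ℂ) := by
  have hN' : (0 : ℝ) < N := by positivity
  refine ⟨fun h ↦ ?_, fun h τ ↦ ?_⟩
  · ext n
    rw [← ModularFormClass.qExpansion_coeff_unique hN' (natCast_mem_strictPeriods_SL N) (f := f)
      h n, coeff_map]
  · have hsum := ModularForm.hasSum_qExpansion f hN' (natCast_mem_strictPeriods_SL N) τ
    rw [h] at hsum
    simpa only [coeff_map, smul_eq_mul] using hsum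

end QExpansion

section IntegralExpansions

/-- The generating series `∑ σₖ(n) qⁿ` of the sums of `k`-th powers of divisors. -/
def sigmaSeries (k : ℕ) : ℤ⟦X⟧ := .mk fun n ↦ (σ k n : ℤ)

lemma qExpansion_E₄ : qExpansion 1 E₄ = (1 + 240 * sigmaSeries 3).map (Int.castRingHom ℂ) := by
  ext n
  have hb : bernoulli 4 = -1 / 30 := by decide +kernel
  rw [show (240 : ℤ⟦X⟧) = C 240 from rfl, E_qExpansion_coeff _ (by decide), coeff_map, map_add,
    coeff_C_mul]
  rcases eq_or_ne n 0 with rfl | hn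
  · simp [sigmaSeries]
  · simp [sigmaSeries, hn, hb, coeff_one]
    norm_num

lemma qExpansion_E₆ : qExpansion 1 E₆ = (1 - 504 * sigmaSeries 5).map (Int.castRingHom ℂ) := by
  ext n
  rw [show (504 : ℤ⟦X⟧) = C 504 from rfl, E_qExpansion_coeff _ (by decide), coeff_map, map_sub,
    coeff_C_mul]
  rcases eq_or_ne n 0 with rfl | hn
  · simp [sigmaSeries]
  · simp [sigmaSeries, hn, bernoulli_six, coeff_one]
    norm_num

lemma twelve_dvd_sigma (n : ℕ) : (12 : ℤ) ∣ 5 * (σ 3 n : ℤ) + 7 * (σ 5 n : ℤ) := by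
  simp only [ArithmeticFunction.sigma_apply, Nat.cast_sum, Finset.mul_sum,
    ← Finset.sum_add_distrib]
  refine Finset.dvd_sum fun d _ ↦ (ZMod.intCast_zmod_eq_zero_iff_dvd _ 12).1 ?_
  have h : ∀ x : ZMod 12, 5 * x ^ 3 + 7 * x ^ 5 = 0 := by decide
  push_cast
  exact h d

lemma twelve_dvd_sigmaSeries : 12 ∣ 5 * sigmaSeries 3 + 7 * sigmaSeries 5 := by
  choose w hw using twelve_dvd_sigma
  refine ⟨.mk w, ?_⟩
  ext n
  rw [show (5 : ℤ⟦X⟧) = C 5 from rfl, show (7 : ℤ⟦X⟧) = C 7 from rfl,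
    show (12 : ℤ⟦X⟧) = C 12 from rfl, map_add, coeff_C_mul, coeff_C_mul, coeff_C_mul]
  simpa only [sigmaSeries, coeff_mk] using hw n

lemma dvd_E₄_cube_sub_E₆_sq :
    1728 ∣ (1 + 240 * sigmaSeries 3) ^ 3 - (1 - 504 * sigmaSeries 5) ^ 2 := by
  obtain ⟨W, hW⟩ := twelve_dvd_sigmaSeries
  refine ⟨100 * sigmaSeries 3 ^ 2 + 8000 * sigmaSeries 3 ^ 3 - 147 * sigmaSeries 5 ^ 2 + W, ?_⟩
  linear_combination 144 * hW

lemma exists_qExpansion_discriminant_eq_map :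
    ∃ D : ℤ⟦X⟧, qExpansion 1 discriminant = D.map (Int.castRingHom ℂ) := by
  have hfun : (1728 : ℂ) • (CuspForm.discriminant : ℍ → ℂ) = ⇑(E₄.pow 3) - ⇑(E₆.pow 2) := by
    ext z
    simp only [Pi.smul_apply, CuspForm.coe_discriminant, discriminant_eq_E₄_cube_sub_E₆_sq z,
      smul_eq_mul, Pi.sub_apply, ModularForm.coe_pow, Pi.pow_apply]
    ring
  obtain ⟨D, hD⟩ := dvd_E₄_cube_sub_E₆_sq
  have hq : (1728 : ℂ) • qExpansion 1 discriminant = (1728 * D).map (Int.castRingHom ℂ) := by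
    rw [← hD, map_sub, map_pow, map_pow, ← qExpansion_E₄, ← qExpansion_E₆,
      ← ModularForm.qExpansion_pow one_pos one_mem_strictPeriods_SL,
      ← ModularForm.qExpansion_pow one_pos one_mem_strictPeriods_SL,
      ← ModularForm.qExpansion_sub one_pos one_mem_strictPeriods_SL, ← hfun,
      ModularForm.qExpansion_smul one_pos one_mem_strictPeriods_SL, CuspForm.coe_discriminant]
  refine ⟨D, ?_⟩
  rw [show (1728 : ℤ⟦X⟧) = C 1728 from rfl, map_mul, map_C] at hq
  ext n
  simpa using congrArg (coeff n) hq

variable (R : Type*) [CommRing R] [Algebra R ℂ]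

lemma hasQExp_of_qExpansion_eq_map {k : ℤ} {f : ModularForm 𝒮ℒ k} {F : ℤ⟦X⟧}
    (h : qExpansion 1 f = F.map (Int.castRingHom ℂ)) :
    HasQExp 1 f (F.map (Int.castRingHom R)) := by
  rw [hasQExp_iff_qExpansion_eq one_ne_zero, Nat.cast_one, h]
  ext n
  simp

lemma exists_hasQExp_E₄ : ∃ e : R⟦X⟧, constantCoeff e = 1 ∧ HasQExp 1 E₄ e := by
  refine ⟨_, ?_, hasQExp_of_qExpansion_eq_map R qExpansion_E₄⟩
  rw [← coeff_zero_eq_constantCoeff_apply, coeff_map]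
  simp [sigmaSeries]

/-- The discriminant form `Δ` as a modular form, forgetting that it is cuspidal. -/
def discriminantForm : ModularForm 𝒮ℒ 12 := CuspForm.discriminant.toModularFormₗ

lemma exists_hasQExp_discriminant :
    ∃ D : R⟦X⟧, Associated X D ∧ HasQExp 1 discriminantForm D := by
  obtain ⟨D, hD⟩ := exists_qExpansion_discriminant_eq_map
  refine ⟨_, associated_X_of_coeff ?_ ?_, hasQExp_of_qExpansion_eq_map R (F := D) hD⟩
  · have h := CuspFormClass.qExpansion_coeff_zero CuspForm.discriminant one_pos
      one_mem_strictPeriods_SL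
    rw [CuspForm.coe_discriminant, hD, coeff_map, eq_intCast, Int.cast_eq_zero] at h
    rw [← coeff_zero_eq_constantCoeff_apply, coeff_map, h, map_zero]
  · have h := discriminant_qExpansion_coeff_one
    rw [hD, coeff_map, eq_intCast, Int.cast_eq_one] at h
    rw [coeff_map, h, map_one]

end IntegralExpansions

section LevelOne

variable {R : Type*} [CommRing R] [Algebra R ℂ] {N k : ℕ} {F : R⟦X⟧}

namespace HasQExp

lemma valueAtInfty_eq (hN : N ≠ 0) {k : ℤ} {f : ModularForm 𝒮ℒ k} (hf : HasQExp N f F) :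
    valueAtInfty f = algebraMap R ℂ (constantCoeff F) := by
  have hN' : (0 : ℝ) < N := by positivity
  have hper := natCast_mem_strictPeriods_SL N
  rw [← qExpansion_coeff_zero hN' (ModularFormClass.analyticAt_cuspFunction_zero f hN' hper)
    (SlashInvariantFormClass.periodic_comp_ofComplex f hper),
    (hasQExp_iff_qExpansion_eq hN f).1 hf, coeff_map, coeff_zero_eq_constantCoeff]

variable [FaithfulSMul R ℂ]

lemma unique (hN : N ≠ 0) {k : ℤ} {f : ModularForm 𝒮ℒ k} {G : R⟦X⟧} (hF : HasQExp N f F)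
    (hG : HasQExp N f G) : F = G :=
  map_injective _ (FaithfulSMul.algebraMap_injective R ℂ) <| by
    rw [← (hasQExp_iff_qExpansion_eq hN f).1 hF, ← (hasQExp_iff_qExpansion_eq hN f).1 hG]

lemma eq_const_of_weight_zero (hN : N ≠ 0) {f : ModularForm 𝒮ℒ 0} (hf : HasQExp N f F) :
    ⇑f = Function.const ℍ (algebraMap R ℂ (constantCoeff F)) ∧ F = C (constantCoeff F) := by
  obtain ⟨c, hc⟩ := ModularFormClass.levelOne_weight_zero_const f
  have hca : c = algebraMap R ℂ (constantCoeff F) := by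
    rw [← hf.valueAtInfty_eq hN, hc]
    exact tendsto_const_nhds.limUnder_eq.symm
  rw [← hca]
  exact ⟨hc, hf.unique hN (by rw [hc, hca]; exact const N _)⟩

lemma exists_div_discriminant (hN : N ≠ 0) {f : ModularForm 𝒮ℒ (12 * (k + 1 : ℕ))}
    (hf : HasQExp N f F) (h0 : constantCoeff F = 0) :
    ∃ (g : ModularForm 𝒮ℒ (12 * k)) (D G : R⟦X⟧), HasQExp N g G ∧ Associated (X ^ N) D ∧
      D * G = F ∧ ∀ τ, discriminant τ * g τ = f τ := by
  have hN' : (0 : ℝ) < N := by positivity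
  have hcusp : (qExpansion 1 f).coeff 0 = 0 := by
    rw [qExpansion_coeff_zero one_pos (ModularFormClass.analyticAt_cuspFunction_zero f one_pos
      one_mem_strictPeriods_SL) (SlashInvariantFormClass.periodic_comp_ofComplex f
      one_mem_strictPeriods_SL), hf.valueAtInfty_eq hN, h0, map_zero]
  let g : ModularForm 𝒮ℒ (12 * k) :=
    .mcast (by push_cast; ring) (CuspForm.discriminantEquiv (toCuspForm f hcusp))
  have hfg (τ : ℍ) : discriminant τ * g τ = f τ :=
    discriminant_mul_discriminantEquiv_apply (toCuspForm f hcusp) τ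
  obtain ⟨D, hD, hΔ⟩ := exists_hasQExp_discriminant R
  have hmul : qExpansion N discriminantForm * qExpansion N g = qExpansion N f := by
    rw [← ModularForm.qExpansion_mul_coe hN' (natCast_mem_strictPeriods_SL N)]
    exact congrArg _ (funext hfg)
  rw [(hasQExp_iff_qExpansion_eq hN _).1 (hΔ.expand_of_one hN),
    (hasQExp_iff_qExpansion_eq hN _).1 hf] at hmul
  have hD' : Associated (X ^ N) (expand N hN D) := associated_X_pow_expand hN hD
  obtain ⟨G, hG, hFG⟩ :=
    exists_mul_eq_of_map_mul_eq (FaithfulSMul.algebraMap_injective R ℂ) hD' hmul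
  exact ⟨g, _, G, (hasQExp_iff_qExpansion_eq hN g).2 hG.symm, hD', hFG, hfg⟩

/-- Subtracting a multiple of a power of `E₄` makes the form cuspidal, hence divisible by `Δ`. -/
lemma exists_eq_add_discriminant_mul (hN : N ≠ 0) {f : ModularForm 𝒮ℒ (12 * (k + 1 : ℕ))}
    (hf : HasQExp N f F) :
    ∃ (g : ModularForm 𝒮ℒ (12 * k)) (D E G : R⟦X⟧), HasQExp N g G ∧ Associated (X ^ N) D ∧
      F = C (constantCoeff F) * E + D * G ∧
      ∀ τ, f τ = algebraMap R ℂ (constantCoeff F) * E₄ τ ^ (3 * (k + 1)) +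
        discriminant τ * g τ := by
  obtain ⟨e, he0, he⟩ := exists_hasQExp_E₄ R
  set a := constantCoeff F
  set E := expand N hN e ^ (3 * (k + 1))
  let h : ModularForm 𝒮ℒ (12 * (k + 1 : ℕ)) :=
    f - algebraMap R ℂ a • .mcast (by push_cast; ring) (E₄.pow (3 * (k + 1)))
  have hh : ⇑h = f - Function.const ℍ (algebraMap R ℂ a) * E₄ ^ (3 * (k + 1)) := by
    rw [← ModularForm.coe_pow]
    rfl
  have hhF : HasQExp N h (F - C a * E) :=
    hh ▸ hf.sub ((const N a).mul ((he.expand_of_one hN).pow _))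
  obtain ⟨g, D, G, hg, hD, hDG, hΔg⟩ := hhF.exists_div_discriminant hN <| by
    simp [E, a, constantCoeff_expand, he0]
  refine ⟨g, D, E, G, hg, hD, by rw [hDG]; ring, fun τ ↦ ?_⟩
  rw [hΔg, hh]
  simp

/-- The leading coefficient of the polynomial is read off from the `q`-expansion, because the
polynomial is found by successively removing poles at the cusp. -/
lemma exists_polynomial (hN : N ≠ 0) {f : ModularForm 𝒮ℒ (12 * k)} (hf : HasQExp N f F) :
    ∃ P : Polynomial R, P.natDegree ≤ k ∧
      (∀ n, Associated (X ^ n) F → IsUnit P.leadingCoeff) ∧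
      ∀ τ, f τ = discriminant τ ^ k * P.aeval (kleinJ τ) := by
  have : IsDomain R := (FaithfulSMul.algebraMap_injective R ℂ).isDomain
  induction k generalizing F with
  | zero =>
    obtain ⟨hfa, hF⟩ := eq_const_of_weight_zero hN (f := f.mcast (b := 0) (by simp)) hf
    replace hfa (τ : ℍ) : f τ = algebraMap R ℂ (constantCoeff F) := congrFun hfa τ
    refine ⟨.C (constantCoeff F), by simp, fun n hn ↦ ?_, fun τ ↦ by simp [hfa]⟩
    rw [Polynomial.leadingCoeff_C]
    exact isUnit_of_associated_X_pow_C (hF ▸ hn)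
  | succ k ih =>
    obtain ⟨g, D, E, G, hg, hD, hF, hfg⟩ := hf.exists_eq_add_discriminant_mul hN
    obtain ⟨P, hP, hPlead, hPτ⟩ := ih hg
    set a := constantCoeff F
    refine ⟨P + .C a * .X ^ (k + 1), ?_, fun n hn ↦ ?_, fun τ ↦ ?_⟩
    · exact Polynomial.natDegree_add_le_of_degree_le (by lia)
        (Polynomial.natDegree_C_mul_X_pow_le _ _)
    · rcases eq_or_ne n 0 with rfl | hn0
      · have ha : IsUnit a := isUnit_iff_constantCoeff.1 (hn.isUnit (by simp))
        rw [Polynomial.leadingCoeff_add_of_degree_lt]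
        · simpa
        · apply Polynomial.degree_lt_degree
          rw [Polynomial.natDegree_C_mul_X_pow _ _ ha.ne_zero]
          lia
      · have ha : a = 0 := X_dvd_iff.1 ((dvd_pow_self X hn0).trans hn.dvd)
        rw [ha, map_zero, zero_mul, zero_add] at hF
        simpa [ha] using hPlead _ (associated_X_pow_of_mul_right hD (hF ▸ hn))
    · have hj : discriminant τ ^ (k + 1) * kleinJ τ ^ (k + 1) = E₄ τ ^ (3 * (k + 1)) := by
        rw [← mul_pow, kleinJ, mul_div_cancel₀ _ (discriminant_ne_zero τ), pow_mul]
      rw [hfg, hPτ, map_add, map_mul, Polynomial.aeval_C, map_pow, Polynomial.aeval_X]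
      linear_combination -algebraMap R ℂ a * hj

lemma isIntegral_kleinJ (hN : N ≠ 0) {f : ModularForm 𝒮ℒ (12 * k)} (hf : HasQExp N f F) {n : ℕ}
    (hF : Associated (X ^ n) F) {τ : ℍ} (h0 : f τ = 0) : IsIntegral R (kleinJ τ) := by
  obtain ⟨P, -, hPlead, hPτ⟩ := hf.exists_polynomial hN
  have hP : IsUnit P.leadingCoeff := hPlead n hF
  have hroot : P.aeval (kleinJ τ) = 0 :=
    (mul_eq_zero.1 ((hPτ τ).symm.trans h0)).resolve_left (pow_ne_zero k (discriminant_ne_zero τ))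
  refine ⟨_, Polynomial.monic_of_isUnit_leadingCoeff_inv_smul hP, ?_⟩
  rw [← Polynomial.aeval_def, Units.smul_def, map_smul, hroot, smul_zero]

end HasQExp

end LevelOne

section Norm

variable (R : Type*) [CommRing R] [Algebra R ℂ] {N k : ℕ}

/-- Up to a complex scalar, `f` has an expansion in `exp (2πiτ / N)` whose coefficients lie in `R`
and whose lowest nonzero coefficient is a unit of `R`. -/
def HasUnitQExp (N : ℕ) (f : ℍ → ℂ) : Prop :=
  ∃ (κ : ℂ) (F : R⟦X⟧) (n : ℕ), Associated (X ^ n) F ∧ HasQExp N (κ • f) F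

variable {R}

namespace HasUnitQExp

lemma prod {ι : Type*} {s : Finset ι} {f : ι → ℍ → ℂ}
    (h : ∀ i ∈ s, HasUnitQExp R N (f i)) : HasUnitQExp R N (∏ i ∈ s, f i) := by
  choose! κ F n hF hf using h
  obtain ⟨m, hm⟩ := exists_associated_X_pow_prod fun i hi ↦ ⟨n i, hF i hi⟩
  exact ⟨∏ i ∈ s, κ i, _, m, hm, Finset.prod_smul s κ f ▸ HasQExp.prod hf⟩

variable [FaithfulSMul R ℂ]

lemma isIntegral_kleinJ (hN : N ≠ 0) {f : ModularForm 𝒮ℒ (12 * k)} (hf : HasUnitQExp R N f)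
    {τ : ℍ} (h0 : f τ = 0) : IsIntegral R (kleinJ τ) := by
  obtain ⟨κ, F, n, hF, hκf⟩ := hf
  exact HasQExp.isIntegral_kleinJ hN (f := κ • f) hκf hF (by simp [h0])

/-- The norm of `f` down to level one vanishes wherever `f` does. -/
lemma isIntegral_kleinJ_of_isArithmetic (hN : N ≠ 0) {𝒢 : Subgroup (GL (Fin 2) ℝ)}
    [𝒢.IsArithmetic] {f : ModularForm 𝒢 (12 * k)}
    (hf : ∀ γ : SL(2, ℤ), HasUnitQExp R N (f ∣[(12 * k : ℤ)] γ)) {τ : ℍ} (h0 : f τ = 0) :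
    IsIntegral R (kleinJ τ) := by
  let g : ModularForm 𝒮ℒ (12 * (k * Nat.card (𝒮ℒ ⧸ 𝒢.subgroupOf 𝒮ℒ) : ℕ)) :=
    .mcast (by push_cast; ring) (ModularForm.norm 𝒮ℒ f)
  let := Fintype.ofFinite (𝒮ℒ ⧸ 𝒢.subgroupOf 𝒮ℒ)
  have hg : ⇑g = ∏ q : 𝒮ℒ ⧸ 𝒢.subgroupOf 𝒮ℒ, SlashInvariantForm.quotientFunc f q :=
    ModularForm.coe_norm 𝒮ℒ f
  refine isIntegral_kleinJ hN (f := g) ?_ ?_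
  · rw [hg]
    refine prod (Quotient.forall.2 ?_)
    rintro ⟨_, γ, rfl⟩ -
    rw [SlashInvariantForm.quotientFunc_mk, ← map_inv]
    exact hf γ⁻¹
  · simpa [hg, Finset.prod_eq_zero_iff, QuotientGroup.exists_mk] using ⟨1, by simpa using h0⟩

end HasUnitQExp

end Norm

section TranslateDiff

variable {k : ℤ}

/-- A modular form for `Γ`, viewed as a modular form for a smaller group. -/
def restrictLevel {Γ Γ' : Subgroup (GL (Fin 2) ℝ)} (f : ModularForm Γ k) (h : Γ' ≤ Γ) :
    ModularForm Γ' k where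
  toFun := f
  slash_action_eq' γ hγ := f.slash_action_eq' γ (h hγ)
  holo' := f.holo'
  bdd_at_cusps' hc := f.bdd_at_cusps' (hc.mono h)

/-- The form `f · (g ∣ A) - (f ∣ A) · g`, which measures the failure of `f / g` to be invariant
under `A`. -/
def translateDiff (f g : ModularForm 𝒮ℒ k) (A : GL (Fin 2) ℝ) :
    ModularForm (𝒮ℒ ⊓ toConjAct A⁻¹ • 𝒮ℒ) (k + k) :=
  (restrictLevel f inf_le_left).mul (restrictLevel (ModularForm.translate g A) inf_le_right) -
    (restrictLevel (ModularForm.translate f A) inf_le_right).mul (restrictLevel g inf_le_left)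

variable (f g : ModularForm 𝒮ℒ k)

lemma coe_translateDiff (A : GL (Fin 2) ℝ) :
    ⇑(translateDiff f g A) = f * (⇑g ∣[k] A) - (⇑f ∣[k] A) * g := rfl

lemma slash_mapGL (γ : SL(2, ℤ)) : ⇑f ∣[k] mapGL ℝ γ = f :=
  f.slash_action_eq' _ ⟨γ, rfl⟩

lemma coe_translateDiff_mapGL_mul (γ : SL(2, ℤ)) (A : GL (Fin 2) ℝ) :
    ⇑(translateDiff f g (mapGL ℝ γ * A)) = translateDiff f g A := by
  rw [coe_translateDiff, coe_translateDiff, SlashAction.slash_mul, SlashAction.slash_mul,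
    slash_mapGL, slash_mapGL]

lemma translateDiff_slash (A : GL (Fin 2) ℝ) (γ : SL(2, ℤ)) :
    ⇑(translateDiff f g A) ∣[k + k] γ = translateDiff f g (A * mapGL ℝ γ) := by
  rw [coe_translateDiff, coe_translateDiff, sub_eq_add_neg, SlashAction.add_slash,
    SlashAction.neg_slash, mul_slash_SL2, mul_slash_SL2, SlashAction.slash_mul,
    SlashAction.slash_mul, ← sub_eq_add_neg]
  congr 2
  · exact slash_mapGL f γ
  · exact slash_mapGL g γ

lemma slash_eq_of_det_pos (f : ℍ → ℂ) (k : ℤ) {A : GL (Fin 2) ℝ} (hA : 0 < A.det.val) (τ : ℍ) :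
    (f ∣[k] A) τ = f (A • τ) * A.det.val ^ (k - 1) * denom A τ ^ (-k) := by
  rw [slash_apply, UpperHalfPlane.σ, if_pos hA, abs_of_pos hA]
  rfl

lemma translateDiff_eq_zero_of_smul_eq {A : GL (Fin 2) ℝ} (hA : 0 < A.det.val) {τ : ℍ}
    (hτ : A • τ = τ) : translateDiff f g A τ = 0 := by
  simp only [coe_translateDiff, Pi.sub_apply, Pi.mul_apply, slash_eq_of_det_pos _ _ hA, hτ]
  ring

end TranslateDiff

section IntegralMatrices

variable {n : ℕ} [NeZero n]

/-- An integral matrix of determinant `n ≠ 0` as an element of `GL₂(ℚ)`. -/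
def toRatGL (A : FixedDetMatrix (Fin 2) ℤ n) : GL (Fin 2) ℚ :=
  .mkOfDetNeZero (A.1.map (Int.castRingHom ℚ)) <| by
    rw [← RingHom.mapMatrix_apply, ← RingHom.map_det, A.2]
    simpa using NeZero.ne n

/-- An integral matrix of determinant `n ≠ 0` as an element of `GL₂(ℝ)`. -/
def toRealGL (A : FixedDetMatrix (Fin 2) ℤ n) : GL (Fin 2) ℝ :=
  (toRatGL A).map (Rat.castHom ℝ)

variable (A : FixedDetMatrix (Fin 2) ℤ n)

lemma toRealGL_apply (i j : Fin 2) : toRealGL A i j = A.1 i j := by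
  simp [toRealGL, toRatGL, Matrix.GeneralLinearGroup.mkOfDetNeZero]

lemma det_toRealGL : (toRealGL A).det.val = n := by
  have h : (A.1 0 0 * A.1 1 1 - A.1 0 1 * A.1 1 0 : ℝ) = n := by
    exact_mod_cast (Matrix.det_fin_two A.1).symm.trans A.2
  simpa [Matrix.det_fin_two, toRealGL_apply] using h

lemma det_toRealGL_pos : 0 < (toRealGL A).det.val := by
  rw [det_toRealGL]
  exact_mod_cast NeZero.pos n

lemma coe_toRealGL_smul (τ : ℍ) :
    ((toRealGL A • τ : ℍ) : ℂ) = (A.1 0 0 * τ + A.1 0 1) / (A.1 1 0 * τ + A.1 1 1) := by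
  rw [coe_smul_of_det_pos (det_toRealGL_pos A)]
  simp [num, denom, toRealGL_apply]

instance isArithmetic_inf_conj :
    (𝒮ℒ ⊓ toConjAct (toRealGL A)⁻¹ • 𝒮ℒ).IsArithmetic := by
  have : (toConjAct (toRealGL A)⁻¹ • 𝒮ℒ).IsArithmetic := by
    rw [toRealGL, ← map_inv]
    exact CongruenceSubgroup.isArithmetic_conj_SL2Z _
  infer_instance

lemma exists_smul_mem_reps : ∃ δ : SL(2, ℤ), δ • A ∈ FixedDetMatrices.reps n := by
  have hn : (n : ℤ) ≠ 0 := by exact_mod_cast NeZero.ne n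
  induction A using FixedDetMatrices.induction_on hn with
  | h0 A h10 h00 h01 h11 => exact ⟨1, by rw [one_smul]; exact ⟨h10, h00, h01, h11⟩⟩
  | hS B hB =>
    obtain ⟨δ, hδ⟩ := hB
    exact ⟨δ * ModularGroup.S⁻¹, by rwa [mul_smul, inv_smul_smul]⟩
  | hT B hB =>
    obtain ⟨δ, hδ⟩ := hB
    exact ⟨δ * ModularGroup.T⁻¹, by rwa [mul_smul, inv_smul_smul]⟩

lemma toRealGL_smul (δ : SL(2, ℤ)) : toRealGL (δ • A) = mapGL ℝ δ * toRealGL A := by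
  ext i j
  simp [toRealGL_apply, FixedDetMatrices.smul_coe, Matrix.mul_apply]

lemma exists_toRealGL_mul_mapGL_eq (γ : SL(2, ℤ)) :
    ∃ (δ : SL(2, ℤ)) (B : FixedDetMatrix (Fin 2) ℤ n), B ∈ FixedDetMatrices.reps n ∧
      toRealGL A * mapGL ℝ γ = mapGL ℝ δ * toRealGL B := by
  let Aγ : FixedDetMatrix (Fin 2) ℤ n :=
    ⟨A.1 * γ.1, by rw [Matrix.det_mul, A.2, γ.2, mul_one]⟩
  have hAγ : toRealGL A * mapGL ℝ γ = toRealGL Aγ := by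
    ext i j
    rw [toRealGL_apply Aγ]
    simp [toRealGL_apply, Matrix.mul_apply, Aγ]
  obtain ⟨δ, hδ⟩ := exists_smul_mem_reps Aγ
  exact ⟨δ⁻¹, δ • Aγ, hδ, by rw [hAγ, toRealGL_smul, map_inv, inv_mul_cancel_left]⟩

variable {A}

lemma exists_eq_of_mem_reps (hA : A ∈ FixedDetMatrices.reps n) :
    ∃ (a d : ℕ) (b : ℤ), a * d = n ∧ A.1 = !![(a : ℤ), b; 0, (d : ℤ)] := by
  obtain ⟨h10, h00, -, -⟩ := hA
  have hdet : A.1 0 0 * A.1 1 1 = n := by simpa [Matrix.det_fin_two, h10] using A.2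
  have hn : (0 : ℤ) < n := by exact_mod_cast NeZero.pos n
  have h11 : 0 < A.1 1 1 := pos_of_mul_pos_right (hn.trans_eq hdet.symm) h00.le
  obtain ⟨a, ha⟩ := Int.eq_ofNat_of_zero_le h00.le
  obtain ⟨d, hd⟩ := Int.eq_ofNat_of_zero_le h11.le
  refine ⟨a, d, A.1 0 1, ?_, ?_⟩
  · rw [ha, hd] at hdet
    exact_mod_cast hdet
  · rw [← ha, ← hd, ← h10]
    exact Matrix.eta_fin_two A.1

end IntegralMatrices

section UpperTriangular

variable {n a d : ℕ} [NeZero n] {A : FixedDetMatrix (Fin 2) ℤ n} {b : ℤ} {k : ℤ}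

lemma qParam_mul_add_div (a : ℕ) (hd : d ≠ 0) (b : ℤ) (z : ℂ) :
    𝕢 (1 : ℕ) ((a * z + b) / d) =
      Complex.exp (2 * π * Complex.I * b / d) * 𝕢 (a * d : ℕ) z ^ a ^ 2 := by
  have hd' : (d : ℂ) ≠ 0 := Nat.cast_ne_zero.2 hd
  rw [Function.Periodic.qParam, Function.Periodic.qParam, ← Complex.exp_nat_mul,
    ← Complex.exp_add]
  congr 1
  push_cast
  field_simp
  ring

lemma slash_toRealGL_of_upperTriangular (f : ℍ → ℂ) (hA : A.1 = !![(a : ℤ), b; 0, (d : ℤ)]) :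
    f ∣[k] toRealGL A =
      ((n : ℂ) ^ (k - 1) * (d : ℂ) ^ (-k)) • (f ∘ fun τ ↦ toRealGL A • τ) := by
  ext τ
  have hdenom : denom (toRealGL A) τ = d := by simp [denom, toRealGL_apply, hA]
  rw [slash_eq_of_det_pos f k (det_toRealGL_pos A), det_toRealGL, hdenom, Pi.smul_apply,
    smul_eq_mul, Function.comp_apply]
  push_cast
  ring

variable {R : Type*} [CommRing R] [Algebra R ℂ]

/-- The terms `f · (g ∣ A)` and `(f ∣ A) · g` have orders `a ^ 2` and `n` at the cusp, and these
differ because `n` is not a square. -/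
lemma hasUnitQExp_translateDiff {f g : ModularForm 𝒮ℒ k} {F G : R⟦X⟧} (hf : HasQExp 1 f F)
    (hF : IsUnit F) (hg : HasQExp 1 g G) (hG : Associated X G) (hn : ¬ IsSquare n)
    (had : a * d = n) (hA : A.1 = !![(a : ℤ), b; 0, (d : ℤ)]) {ζ : R} (hζ : IsUnit ζ)
    (hζb : algebraMap R ℂ ζ = Complex.exp (2 * π * Complex.I * b / d)) :
    HasUnitQExp R n (translateDiff f g (toRealGL A)) := by
  have hn0 : n ≠ 0 := NeZero.ne n
  have ha : a ≠ 0 := by rintro rfl; exact hn0 (by simp [← had])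
  have hd : d ≠ 0 := by rintro rfl; exact hn0 (by simp [← had])
  have hq (τ : ℍ) : 𝕢 (1 : ℕ) (toRealGL A • τ : ℍ) =
      algebraMap R ℂ ζ * 𝕢 n τ ^ a ^ 2 := by
    simpa [coe_toRealGL_smul, hA, hζb, had] using qParam_mul_add_div a hd b τ
  have ha2 : a ^ 2 ≠ 0 := pow_ne_zero 2 ha
  let c : ℂ := (n : ℂ) ^ (k - 1) * (d : ℂ) ^ (-k)
  have hc : c ≠ 0 :=
    mul_ne_zero (zpow_ne_zero _ (Nat.cast_ne_zero.2 hn0)) (zpow_ne_zero _ (Nat.cast_ne_zero.2 hd))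
  let φ (τ : ℍ) : ℍ := toRealGL A • τ
  have hdiff : c⁻¹ • ⇑(translateDiff f g (toRealGL A)) = f * (g ∘ φ) - (f ∘ φ) * g := by
    rw [coe_translateDiff, slash_toRealGL_of_upperTriangular f hA,
      slash_toRealGL_of_upperTriangular g hA, mul_smul_comm, smul_mul_assoc, ← smul_sub,
      inv_smul_smul₀ hc]
  let Fφ := expand (a ^ 2) ha2 (rescale ζ F)
  let Gφ := expand (a ^ 2) ha2 (rescale ζ G)
  have hGφ : Associated (X ^ a ^ 2) Gφ := associated_X_pow_expand ha2 (associated_X_rescale hζ hG)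
  have hGn : Associated (X ^ n) (expand n hn0 G) := associated_X_pow_expand hn0 hG
  have hord : a ^ 2 ≠ n := fun h ↦ hn ⟨a, by rw [← h, sq]⟩
  obtain ⟨l, hl⟩ := exists_associated_X_pow_sub
    (hGφ.trans (associated_unit_mul_right Gφ _ (hF.map (expand n hn0))))
    (hGn.trans (associated_unit_mul_right _ Fφ ((hF.map (rescale ζ)).map (expand _ ha2)))) hord
  refine ⟨c⁻¹, _, l, hl, hdiff ▸ ?_⟩
  exact ((hf.expand_of_one hn0).mul (hg.comp_expand_rescale ha2 hq)).sub
    ((hf.comp_expand_rescale ha2 hq).mul (hg.expand_of_one hn0))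

end UpperTriangular

section ComplexMultiplication

lemma exists_isUnit_eq_exp (b : ℤ) {d : ℕ} (hd : d ≠ 0) :
    ∃ ζ : integralClosure ℤ ℂ, IsUnit ζ ∧
      algebraMap (integralClosure ℤ ℂ) ℂ ζ = Complex.exp (2 * π * Complex.I * b / d) := by
  have hpow : Complex.exp (2 * π * Complex.I * b / d) ^ d = 1 := by
    have hd' : (d : ℂ) ≠ 0 := Nat.cast_ne_zero.2 hd
    rw [← Complex.exp_nat_mul, Complex.exp_eq_one_iff]
    exact ⟨b, by field_simp⟩
  have hint : IsIntegral ℤ (Complex.exp (2 * π * Complex.I * b / d)) :=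
    .of_pow (Nat.pos_of_ne_zero hd) (hpow ▸ isIntegral_one)
  exact ⟨⟨_, hint⟩, IsUnit.of_pow_eq_one (Subtype.ext hpow) hd, rfl⟩

/-- The cube of the Eisenstein series `E₄`, in the weight of the discriminant. -/
def E₄Cube : ModularForm 𝒮ℒ 12 := .mcast (by norm_num) (E₄.pow 3)

lemma coe_E₄Cube : ⇑E₄Cube = E₄ ^ 3 := ModularForm.coe_pow E₄ 3

variable {n : ℕ} [NeZero n] (A : FixedDetMatrix (Fin 2) ℤ n)

lemma hasUnitQExp_translateDiff_slash (hn : ¬ IsSquare n) (γ : SL(2, ℤ)) :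
    HasUnitQExp (integralClosure ℤ ℂ) n
      (⇑(translateDiff E₄Cube discriminantForm (toRealGL A)) ∣[(12 + 12 : ℤ)] γ) := by
  obtain ⟨δ, B, hB, hAB⟩ := exists_toRealGL_mul_mapGL_eq A γ
  rw [translateDiff_slash, hAB, coe_translateDiff_mapGL_mul]
  obtain ⟨a, d, b, had, hBabd⟩ := exists_eq_of_mem_reps hB
  have hd : d ≠ 0 := by rintro rfl; exact NeZero.ne n (by simp [← had])
  obtain ⟨ζ, hζ, hζb⟩ := exists_isUnit_eq_exp b hd
  obtain ⟨e, he, hE₄⟩ := exists_hasQExp_E₄ (integralClosure ℤ ℂ)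
  obtain ⟨D, hD, hΔ⟩ := exists_hasQExp_discriminant (integralClosure ℤ ℂ)
  exact hasUnitQExp_translateDiff (coe_E₄Cube ▸ hE₄.pow 3)
    ((isUnit_powerSeries_of_constantCoeff_eq_one he).pow 3) hΔ hD hn had hBabd hζ hζb

variable {A}

lemma isIntegral_kleinJ_of_smul_eq (hn : ¬ IsSquare n) {τ : ℍ} (hτ : toRealGL A • τ = τ) :
    IsIntegral ℤ (kleinJ τ) := by
  refine isIntegral_trans (A := integralClosure ℤ ℂ) _ ?_
  let f : ModularForm (𝒮ℒ ⊓ toConjAct (toRealGL A)⁻¹ • 𝒮ℒ) (12 * (2 : ℕ)) :=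
    .mcast (by norm_num) (translateDiff E₄Cube discriminantForm (toRealGL A))
  exact HasUnitQExp.isIntegral_kleinJ_of_isArithmetic (NeZero.ne n) (f := f)
    (hasUnitQExp_translateDiff_slash A hn)
    (translateDiff_eq_zero_of_smul_eq _ _ (det_toRealGL_pos A) hτ)

lemma toRealGL_smul_eq_self {τ : ℍ}
    (hτ : (A.1 0 0 * τ + A.1 0 1 : ℂ) = (A.1 1 0 * τ + A.1 1 1) * τ) : toRealGL A • τ = τ := by
  have hdenom : (A.1 1 0 * τ + A.1 1 1 : ℂ) ≠ 0 := by
    simpa [denom, toRealGL_apply] using denom_ne_zero (toRealGL A) τ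
  ext
  rw [coe_toRealGL_smul, hτ, mul_div_cancel_left₀ _ hdenom]

end ComplexMultiplication

/-- The `j`-invariant of an elliptic curve with complex multiplication by an order in an
imaginary quadratic field is an algebraic integer. -/
theorem j_isIntegral_of_cm (ω₁ ω₂ : ℂ) (hb : IsLatticeBasis ω₁ ω₂)
    (hcm : HasCM (latticeOf ω₁ ω₂)) :
    IsIntegral ℤ (latticeJ (latticeOf ω₁ ω₂)) := by
  obtain ⟨ω, τ, hω, hΛ⟩ := hb.exists_latticeOf_eq
  rw [hΛ] at hcm ⊢
  rw [latticeJ_latticeOf hω]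
  obtain ⟨a, b, c, d, hpos, hsq, hfix⟩ := hcm.exists_fixing_matrix_not_isSquare hω
  obtain ⟨n, hn⟩ := Int.eq_ofNat_of_zero_le hpos.le
  have : NeZero n := ⟨by rintro rfl; exact hpos.ne' hn⟩
  let A : FixedDetMatrix (Fin 2) ℤ n := ⟨!![a, b; c, d], by rw [Matrix.det_fin_two_of, hn]⟩
  have hAτ : toRealGL A • τ = τ := toRealGL_smul_eq_self hfix
  have hnsq : ¬ IsSquare n := by
    rintro ⟨r, rfl⟩
    exact hsq ⟨r, by exact_mod_cast hn⟩
  exact isIntegral_kleinJ_of_smul_eq hnsq hAτ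

end
end

section
/- Let S' be a smooth projective curve over a number field K, s₀ ∈ S'(K), and x ∈ K(S') a rational function. Then there exists a finite cover π: C' → S' with C' a smooth projective curve over a finite extension of K and a function x' ∈ K̄(C') such that the zero divisor of x' is supported exactly on π^{-1}(s₀), i.e. x' vanishes only at the preimages of s₀. -/
noncomputable section

open scoped Polynomial
open Polynomial hiding map_ne_zero

/-!
Pick `u ∈ F` with positive order at `O₀`, make `F` a `K[X]`-algebra by `X ↦ u`, and let `B` be the
integral closure of `K[X]` in `F`, of rank `n`. As `B / X B` has dimension at most `n`, it is
Artinian, and the idempotent cutting out the center of `O₀` lifts to some `h ∈ B` which is a unit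
at `O₀` and divisible by `u` at every other zero of `u`.

Let `b₁, …, bₙ ∈ B` be independent over `K[X]`, with poles of order at most that of `u ^ c` at the
poles of `u`. Since `B / X ^ m B` has dimension at most `m * n`, counting dimensions of the spaces
of polynomials `pᵢ` of degree `< k` and `q` of degree `< m` yields, for `m = k + c` and `k` large,
a relation `s + q * h ^ m = u ^ m * z` with `s = ∑ pᵢ bᵢ ≠ 0` and `z ∈ B`. Put
`w = s / u ^ m = z - q * (h / u) ^ m`. The first expression shows that `w` vanishes at the poles
of `u`, the second that `w` is regular at the zeros of `u` other than `O₀`. If `w` were regular at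
`O₀` too, it would be integral over `K`, hence a unit everywhere. So `O₀` is the only pole of `w`,
and the function `w⁻¹` works on every cover of the curve, in particular on the trivial one.
-/

section Valuation

variable {F Γ₀ : Type*} [Field F] [LinearOrderedCommGroupWithZero Γ₀] (v : Valuation F Γ₀)

theorem valuation_le_of_monic_of_aeval_eq_zero {R : Type*} [CommRing R] [Algebra R F] {p : R[X]}
    (hp : p.Monic) {f : F} (hf : aeval f p = 0) {γ : Γ₀} (hγ : 1 ≤ γ)
    (hcoeff : ∀ i, v (algebraMap R F (p.coeff i)) ≤ γ) : v f ≤ γ := by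
  by_contra! hlt
  have hpow : f ^ p.natDegree =
      -∑ i ∈ Finset.range p.natDegree, algebraMap R F (p.coeff i) * f ^ i := by
    rw [eq_neg_iff_add_eq_zero, ← hf, aeval_eq_sum_range, Finset.sum_range_succ, add_comm,
      hp.coeff_natDegree, one_smul]
    simp only [Algebra.smul_def]
  have hf0 : 0 < v f := zero_lt_one.trans (hγ.trans_lt hlt)
  refine (lt_irrefl (v (f ^ p.natDegree))) ?_
  conv_lhs => rw [hpow, Valuation.map_neg]
  refine v.map_sum_lt (by simpa using pow_ne_zero _ hf0.ne') fun i hi => ?_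
  calc v (algebraMap R F (p.coeff i) * f ^ i) ≤ γ * v f ^ i := by
        rw [map_mul, map_pow]; gcongr; exact hcoeff i
    _ < v f * v f ^ i := by gcongr; exact pow_pos hf0 i
    _ = v f ^ (i + 1) := (pow_succ' _ _).symm
    _ ≤ v (f ^ p.natDegree) := by
        rw [map_pow]
        exact pow_le_pow_right₀ (hγ.trans hlt.le) (Finset.mem_range.mp hi)

variable {K : Type*} [Field K] [Algebra K F] [v.IsTrivialOn K]

theorem valuation_aeval_lt_pow_of_one_lt {u : F} (hu : 1 < v u) {p : K[X]} {k : ℕ}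
    (hp : p.degree < k) : v (aeval u p) < v u ^ k := by
  rcases eq_or_ne p 0 with rfl | hp0
  · rw [map_zero, map_zero]
    exact pow_pos (zero_lt_one.trans hu) k
  · rw [valuation_aeval_eq_valuation_X_pow_natDegree_of_one_lt_valuation_X _ hu hp0]
    exact pow_lt_pow_right₀ hu ((natDegree_lt_iff_degree_lt hp0).mpr hp)

theorem valuation_aeval_eq_one_of_not_X_dvd {u : F} (hu : v u < 1) {p : K[X]} (hp : ¬X ∣ p) :
    v (aeval u p) = 1 := by
  have hcoeff : v (algebraMap K F (p.coeff 0)) = 1 :=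
    Valuation.IsTrivialOn.eq_one _ (mt X_dvd_iff.mpr hp)
  have hdivX : v (aeval u p.divX) ≤ 1 := by
    rw [aeval_eq_sum_range]
    refine v.map_sum_le fun i _ => ?_
    rw [Algebra.smul_def, map_mul, map_pow]
    exact mul_le_one' (Valuation.IsTrivialOn.valuation_algebraMap_le_one v _)
      (pow_le_one₀ zero_le hu.le)
  rw [← divX_mul_X_add p, map_add, map_mul, aeval_X, aeval_C, ← hcoeff]
  refine v.map_add_eq_of_lt_right ?_
  rw [hcoeff, map_mul]
  exact (mul_le_of_le_one_left' hdivX).trans_lt hu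

theorem X_pow_dvd_of_valuation_aeval_le {u : F} (hu0 : u ≠ 0) (hu : v u < 1) {p : K[X]} {m : ℕ}
    (h : v (aeval u p) ≤ v u ^ m) : X ^ m ∣ p := by
  rcases eq_or_ne p 0 with rfl | hp0
  · exact dvd_zero _
  obtain ⟨q, hpq, hq⟩ :=
    (FiniteMultiplicity.of_not_isUnit not_isUnit_X hp0).exists_eq_pow_mul_and_not_dvd
  rw [hpq, map_mul, map_pow, aeval_X, map_mul, map_pow,
    valuation_aeval_eq_one_of_not_X_dvd v hu hq, mul_one,
    pow_le_pow_iff_right_of_lt_one₀ (v.pos_iff.mpr hu0) hu] at h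
  rw [hpq]
  exact Dvd.dvd.mul_right (pow_dvd_pow X h) q

end Valuation

section ValuationSubring

variable {F : Type*} [Field F] {O : ValuationSubring F}

theorem isTrivialOn_valuation {K : Type*} [Field K] [Algebra K F]
    (hK : ∀ c : K, algebraMap K F c ∈ O) : O.valuation.IsTrivialOn K :=
  .of_le_one _ fun c => (O.valuation_le_one_iff _).mpr (hK c)

theorem one_lt_valuation_of_notMem {f : F} (hf : f ∉ O) :
    1 < O.valuation f := by
  rwa [← not_le, O.valuation_le_one_iff]

variable (O) in
theorem inv_notMem_iff {x : F} : x⁻¹ ∉ O ↔ x ≠ 0 ∧ O.valuation x < 1 := by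
  rcases eq_or_ne x 0 with rfl | hx
  · simp [O.zero_mem]
  · rw [← O.valuation_le_one_iff, map_inv₀, not_le,
      one_lt_inv₀ (zero_lt_iff.mpr ((map_ne_zero _).mpr hx))]
    simp [hx]

variable (O) in
theorem mem_of_isIntegral {R : Type*} [CommRing R] [Algebra R F]
    (hR : ∀ r : R, algebraMap R F r ∈ O) {f : F} (hf : IsIntegral R f) : f ∈ O := by
  obtain ⟨p, hp, hpf⟩ := hf
  rw [← O.valuation_le_one_iff]
  exact valuation_le_of_monic_of_aeval_eq_zero _ hp hpf le_rfl
    fun i => (O.valuation_le_one_iff _).mpr (hR _)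

theorem isIntegral_of_forall_mem {R : Type*} [CommRing R] [Algebra R F] {f : F}
    (hf : ∀ O : ValuationSubring F, (∀ r : R, algebraMap R F r ∈ O) → f ∈ O) :
    IsIntegral R f := by
  change f ∈ (integralClosure R F).toSubring
  rw [Subring.eq_iInf_of_isIntegrallyClosedIn (R := (integralClosure R F).toSubring)]
  simp only [Subring.mem_iInf]
  exact fun ⟨O, hO⟩ => hf O fun r => hO (algebraMap_mem (integralClosure R F) r)

variable {K : Type*} [Field K] [Algebra K F] [Algebra K[X] F] [IsScalarTower K K[X] F]

theorem exists_valuation_le_pow_of_isIntegral {ι : Type*} [Finite ι] {f : ι → F}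
    (hf : ∀ i, IsIntegral K[X] (f i)) :
    ∃ c : ℕ, ∀ O : ValuationSubring F, (∀ a : K, algebraMap K F a ∈ O) →
      algebraMap K[X] F X ∉ O → ∀ i, O.valuation (f i) ≤ O.valuation (algebraMap K[X] F X) ^ c := by
  choose p hp hpf using hf
  obtain ⟨c, hc⟩ : ∃ c, ∀ i j, ((p i).coeff j).natDegree ≤ c := by
    cases nonempty_fintype ι
    refine ⟨∑ i, (p i).support.sup fun j => ((p i).coeff j).natDegree, fun i j => ?_⟩
    refine le_trans ?_ (Finset.single_le_sum (fun _ _ => zero_le) (Finset.mem_univ i))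
    by_cases hj : j ∈ (p i).support
    · exact Finset.le_sup (f := fun j => ((p i).coeff j).natDegree) hj
    · simp [notMem_support_iff.mp hj]
  refine ⟨c + 1, fun O hK hu i => ?_⟩
  have := isTrivialOn_valuation hK
  have hu1 := one_lt_valuation_of_notMem hu
  refine valuation_le_of_monic_of_aeval_eq_zero _ (hp i) (hpf i) (one_le_pow₀ hu1.le) fun j => ?_
  rw [← aeval_X_left_apply ((p i).coeff j), ← aeval_algebraMap_apply]
  refine (valuation_aeval_lt_pow_of_one_lt _ hu1 (degree_le_natDegree.trans_lt ?_)).le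
  exact Nat.cast_lt.mpr (Nat.lt_succ_of_le (hc i j))

theorem valuation_sum_smul_lt (hK : ∀ a : K, algebraMap K F a ∈ O)
    (hu : algebraMap K[X] F X ∉ O) {ι : Type*} [Fintype ι] {p : ι → K[X]} {f : ι → F} {k c : ℕ}
    (hp : ∀ i, (p i).degree < k)
    (hf : ∀ i, O.valuation (f i) ≤ O.valuation (algebraMap K[X] F X) ^ c) :
    O.valuation (∑ i, p i • f i) < O.valuation (algebraMap K[X] F X) ^ (k + c) := by
  have := isTrivialOn_valuation hK
  have hu1 := one_lt_valuation_of_notMem hu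
  have hu0 : 0 < O.valuation (algebraMap K[X] F X) := zero_lt_one.trans hu1
  refine O.valuation.map_sum_lt (pow_pos hu0 _).ne' fun i _ => ?_
  rw [Algebra.smul_def, map_mul, pow_add, ← aeval_X_left_apply (p i), ← aeval_algebraMap_apply]
  exact mul_lt_mul_of_lt_of_le_of_nonneg_of_pos (valuation_aeval_lt_pow_of_one_lt _ hu1 (hp i))
    (hf i) zero_le (pow_pos hu0 c)

end ValuationSubring

theorem linearIndependent_of_forall_eq_smul {R N ι : Type*} [CommRing R] [AddCommGroup N]
    [Module R N] {p : R} (hsep : ∀ r : R, (∀ k : ℕ, p ^ k ∣ r) → r = 0)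
    (htf : ∀ x : N, p • x = 0 → x = 0) {b : ι → N}
    (h : ∀ (g : ι →₀ R) (x : N), Finsupp.linearCombination R b g = p • x → ∃ q, g = p • q) :
    LinearIndependent R b := by
  rw [linearIndependent_iff]
  have key : ∀ (k : ℕ) (g : ι →₀ R), Finsupp.linearCombination R b g = 0 → ∃ q, g = p ^ k • q := by
    intro k
    induction k with
    | zero => exact fun g _ => ⟨g, by rw [pow_zero, one_smul]⟩
    | succ k ih =>
      intro g hg
      obtain ⟨q, rfl⟩ := h g 0 (by rw [hg, smul_zero])
      obtain ⟨q, rfl⟩ := ih q (htf _ (by rw [← map_smul, hg]))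
      exact ⟨q, by rw [pow_succ', mul_smul]⟩
  intro g hg
  ext i
  refine hsep _ fun k => ?_
  obtain ⟨q, rfl⟩ := key k g hg
  exact ⟨q i, rfl⟩

theorem rank_quotient_range_pow_le {K V : Type*} [Field K] [AddCommGroup V] [Module K V]
    (φ : V →ₗ[K] V) (m : ℕ) :
    Module.rank K (V ⧸ LinearMap.range (φ ^ m)) ≤ m * Module.rank K (V ⧸ LinearMap.range φ) := by
  induction m with
  | zero =>
    have : Subsingleton (V ⧸ LinearMap.range (φ ^ 0)) := by
      rw [Submodule.Quotient.subsingleton_iff, pow_zero]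
      exact LinearMap.range_id
    simp
  | succ m ih =>
    have hle : LinearMap.range (φ ^ (m + 1)) ≤ LinearMap.range φ := by
      rw [pow_succ']
      exact LinearMap.range_comp_le_range _ _
    have hle' : LinearMap.range (φ ^ m) ≤ (LinearMap.range (φ ^ (m + 1))).comap φ := by
      rintro _ ⟨x, rfl⟩
      exact ⟨x, by rw [pow_succ']; rfl⟩
    let f := Submodule.factor hle
    let g := Submodule.mapQ _ _ φ hle'
    have hker : LinearMap.ker f ≤ LinearMap.range g := by
      intro x hx
      obtain ⟨x, rfl⟩ := Submodule.mkQ_surjective _ x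
      have : x ∈ LinearMap.range φ := by
        rw [← Submodule.Quotient.mk_eq_zero]
        exact hx
      obtain ⟨y, rfl⟩ := this
      exact ⟨Submodule.Quotient.mk y, rfl⟩
    rw [← LinearMap.rank_range_add_rank_ker f, Nat.cast_succ, add_mul, one_mul, add_comm]
    exact add_le_add ((Submodule.rank_mono hker).trans ((rank_range_le g).trans ih))
      (Submodule.rank_le _)

section PolynomialModule

variable {K N : Type*} [Field K] [AddCommGroup N] [Module K N] [Module K[X] N]
  [IsScalarTower K K[X] N]

theorem rank_quotient_range_lsmul_X_le (htf : ∀ x : N, (X : K[X]) • x = 0 → x = 0) :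
    Module.rank K (N ⧸ LinearMap.range (Algebra.lsmul K K N (X : K[X]))) ≤ Module.rank K[X] N := by
  set L := LinearMap.range (Algebra.lsmul K K N (X : K[X]))
  have hC (p : K[X]) (x : N) : L.mkQ (p • x) = p.coeff 0 • L.mkQ x := by
    rw [← map_smul, ← sub_eq_zero, ← map_sub, Submodule.mkQ_apply, Submodule.Quotient.mk_eq_zero]
    refine ⟨p.divX • x, ?_⟩
    nth_rw 2 [← divX_mul_X_add p]
    rw [Algebra.lsmul_coe, add_smul, mul_comm, mul_smul, ← algebraMap_eq, algebraMap_smul,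
      add_sub_cancel_right]
  rw [Module.rank_def K]
  refine ciSup_le' fun ⟨s, hs⟩ => ?_
  choose b hb using fun i : s => L.mkQ_surjective i
  suffices LinearIndependent K[X] b from this.cardinal_le_rank
  refine linearIndependent_of_forall_eq_smul (p := X) (fun r hr => ?_) htf fun g x hgx => ?_
  · ext k
    exact X_pow_dvd_iff.mp (hr (k + 1)) k k.lt_succ_self
  · have hcoeff : g.mapRange (coeff · 0) (coeff_zero 0) = 0 := by
      refine linearIndependent_iff.mp hs _ ?_
      have : L.mkQ (Finsupp.linearCombination K[X] b g) = 0 := by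
        rw [hgx, Submodule.mkQ_apply, Submodule.Quotient.mk_eq_zero]
        exact ⟨x, rfl⟩
      simpa [Finsupp.linearCombination_apply, Finsupp.sum_mapRange_index, map_finsuppSum, hC, hb]
        using this
    refine ⟨g.mapRange divX divX_zero, Finsupp.ext fun i => ?_⟩
    have : (g i).coeff 0 = 0 := DFunLike.congr_fun hcoeff i
    simpa [this] using (X_mul_divX_add (g i)).symm

theorem finrank_degreeLT (m : ℕ) : Module.finrank K (degreeLT K m) = m := by
  rw [(degreeLTEquiv K m).finrank_eq, Module.finrank_fin_fun]

theorem rank_quotient_range_lsmul_X_pow_le {n : ℕ} (hn : Module.rank K[X] N ≤ n)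
    (htf : ∀ x : N, (X : K[X]) • x = 0 → x = 0) (m : ℕ) :
    Module.rank K (N ⧸ LinearMap.range (Algebra.lsmul K K N (X ^ m : K[X]))) ≤ (m * n : ℕ) := by
  rw [map_pow, Nat.cast_mul]
  exact (rank_quotient_range_pow_le _ m).trans
    (mul_le_mul_right ((rank_quotient_range_lsmul_X_le htf).trans hn) _)

theorem exists_sum_smul_add_smul_eq_X_pow_smul {n : ℕ} (hn : Module.rank K[X] N ≤ n)
    (htf : ∀ x : N, (X : K[X]) • x = 0 → x = 0) {ι : Type*} [Fintype ι] (b : ι → N) (y : N)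
    {k m : ℕ} (h : m * n < Fintype.card ι * k + m) :
    ∃ (p : ι → K[X]) (q : K[X]) (z : N), (∀ i, (p i).degree < k) ∧ q.degree < m ∧
      (p ≠ 0 ∨ q ≠ 0) ∧ ∑ i, p i • b i + q • y = (X ^ m : K[X]) • z := by
  let S : (ι → degreeLT K k) × degreeLT K m →ₗ[K] N :=
    ((Fintype.linearCombination K[X] b).restrictScalars K ∘ₗ
      (degreeLT K k).subtype.compLeft ι).coprod
    ((LinearMap.toSpanSingleton K[X] N y).restrictScalars K ∘ₗ (degreeLT K m).subtype)
  have hrank := rank_quotient_range_lsmul_X_pow_le hn htf m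
  have : FiniteDimensional K (N ⧸ LinearMap.range (Algebra.lsmul K K N (X ^ m : K[X]))) :=
    Module.rank_lt_aleph0_iff.mp (hrank.trans_lt Cardinal.natCast_lt_aleph0)
  have (j : ℕ) : FiniteDimensional K (degreeLT K j) := .equiv (degreeLTEquiv K j).symm
  obtain ⟨⟨p, q⟩, hpq, hne⟩ := Submodule.exists_mem_ne_zero_of_ne_bot
    (LinearMap.ker_ne_bot_of_finrank_lt (f := (LinearMap.range _).mkQ ∘ₗ S) <| by
      rw [Module.finrank_prod, Module.finrank_pi_fintype]
      simp only [finrank_degreeLT, Finset.sum_const, Finset.card_univ, smul_eq_mul]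
      exact (Module.finrank_le_of_rank_le hrank).trans_lt h)
  obtain ⟨z, hz⟩ : S (p, q) ∈ LinearMap.range (Algebra.lsmul K K N (X ^ m : K[X])) := by
    rwa [← Submodule.ker_mkQ (LinearMap.range _)]
  refine ⟨fun i => p i, q, z, fun i => mem_degreeLT.mp (p i).2, mem_degreeLT.mp q.2, ?_, hz.symm⟩
  contrapose! hne
  exact Prod.ext (funext fun i => Subtype.ext (congrFun hne.1 i)) (Subtype.ext hne.2)

end PolynomialModule

-- Multiplied by the leading coefficient, `f` becomes integral over `A`, which allows lowering the
-- degree of the equation as long as that coefficient lies in `P`.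
theorem exists_algebraMap_mul_eq_of_aeval_eq_zero {A F : Type*} [CommRing A] [CommRing F]
    [Algebra A F] [IsIntegrallyClosedIn A F] {P : Ideal A} {f : F} {p : A[X]}
    (hpf : aeval f p = 0) {i : ℕ} (hi : p.coeff i ∉ P) :
    ∃ a b : A, (a ∉ P ∨ b ∉ P) ∧ algebraMap A F a * f = algebraMap A F b := by
  obtain ⟨n, hn⟩ : ∃ n, p.natDegree ≤ n := ⟨_, le_rfl⟩
  induction n generalizing p i with
  | zero =>
    obtain ⟨a, rfl⟩ := natDegree_eq_zero.mp (Nat.le_zero.mp hn)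
    refine ⟨a, 0, .inl fun ha => hi ?_, ?_⟩
    · rw [coeff_C]
      split_ifs
      exacts [ha, P.zero_mem]
    · rw [← aeval_C f a, hpf, zero_mul, map_zero]
  | succ n ih =>
    obtain ⟨b, hb⟩ : ∃ b, algebraMap A F b = p.coeff (n + 1) • f := by
      refine IsIntegrallyClosedIn.isIntegral_iff.mp ?_
      rcases hn.eq_or_lt with h | h
      · rw [← h]
        exact isIntegral_leadingCoeff_smul _ _ hpf
      · rw [coeff_eq_zero_of_natDegree_lt h, zero_smul]
        exact isIntegral_zero
    by_cases hab : p.coeff (n + 1) ∉ P ∨ b ∉ P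
    · exact ⟨_, b, hab, by rw [hb, Algebra.smul_def]⟩
    push Not at hab
    refine ih (p := p.erase (n + 1) + C b * X ^ n) (i := i) ?_ ?_ ?_
    · rw [← hpf]
      nth_rw 2 [← monomial_add_erase p (n + 1)]
      simp only [map_add, map_mul, aeval_C, aeval_X_pow, aeval_monomial, hb, Algebra.smul_def]
      ring
    · have hin : i ≠ n + 1 := by
        rintro rfl
        exact hi hab.1
      rw [coeff_add, coeff_erase, if_neg hin, coeff_C_mul_X_pow]
      split_ifs
      · rwa [P.add_mem_iff_left hab.2]
      · rwa [add_zero]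
    · rw [natDegree_le_iff_coeff_eq_zero]
      intro j hj
      rw [coeff_add, coeff_C_mul_X_pow, if_neg hj.ne', add_zero, coeff_erase]
      split_ifs with h
      · rfl
      · exact coeff_eq_zero_of_natDegree_lt (hn.trans_lt (by omega))

theorem exists_notMem_mul_one_sub_mem {R : Type*} [CommRing R] {I P : Ideal R}
    [IsArtinianRing (R ⧸ I)] [hP : P.IsPrime] (hIP : I ≤ P) :
    ∃ h ∉ P, h * (1 - h) ∈ I ∧ ∀ Q : Ideal R, Q.IsPrime → I ≤ Q → Q ≠ P → h ∈ Q := by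
  have hprime {Q : Ideal R} (hQ : Q.IsPrime) (hIQ : I ≤ Q) :
      (Q.map (Ideal.Quotient.mk I)).IsPrime :=
    Ideal.map_isPrime_of_surjective Ideal.Quotient.mk_surjective (by rwa [Ideal.mk_ker])
  obtain ⟨e, he, hD⟩ := PrimeSpectrum.exists_idempotent_basicOpen_eq_of_isClopen
    (isClopen_discrete {(⟨_, hprime hP hIP⟩ : PrimeSpectrum (R ⧸ I))})
  obtain ⟨h, rfl⟩ := Ideal.Quotient.mk_surjective e
  have hmem {Q : Ideal R} (hQ : Q.IsPrime) (hIQ : I ≤ Q) :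
      h ∉ Q ↔ Q.map (Ideal.Quotient.mk I) = P.map (Ideal.Quotient.mk I) := by
    rw [← Ideal.mem_quotient_iff_mem hIQ]
    simpa [PrimeSpectrum.ext_iff] using (Set.ext_iff.mp hD ⟨_, hprime hQ hIQ⟩).symm
  refine ⟨h, (hmem hP hIP).mpr rfl, ?_, fun Q hQ hIQ => ?_⟩
  · rw [← Ideal.Quotient.eq_zero_iff_mem, map_mul, map_sub, map_one, he.mul_one_sub_self]
  · contrapose!
    rw [hmem hQ hIQ]
    intro h
    rw [← Ideal.comap_map_mk hIQ, h, Ideal.comap_map_mk hIP]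

theorem exists_aeval_eq_zero_and_not_dvd_coeff {R S : Type*} [CommRing R]
    [IsGCDMonoid R] [CommRing S] [IsDomain S] [Algebra R S] [Module.IsTorsionFree R S] {π : R}
    (hπ : ¬IsUnit π) {s : S} (hs : IsAlgebraic R s) :
    ∃ p : R[X], aeval s p = 0 ∧ ∃ i, ¬π ∣ p.coeff i := by
  let _ : NormalizedGCDMonoid R := Nonempty.some inferInstance
  obtain ⟨p, hp0, hps⟩ := hs
  refine ⟨p.primPart, aeval_primPart_eq_zero hp0 hps, ?_⟩
  by_contra! h
  exact hπ (p.isPrimitive_primPart _ (C_dvd_iff_dvd_coeff _ _ |>.mpr h))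

section Center

variable {B F : Type*} [CommRing B] [Field F] [Algebra B F] {O : ValuationSubring F}

/-- The center on `B` of a valuation ring `O` containing the image of `B`: the prime ideal of the
elements of `B` which become nonunits in `O`. -/
def valuationCenter (hB : ∀ b : B, algebraMap B F b ∈ O) : Ideal B :=
  (IsLocalRing.maximalIdeal O).comap ((algebraMap B F).codRestrict O hB)

instance valuationCenter_isPrime (hB : ∀ b : B, algebraMap B F b ∈ O) :
    (valuationCenter hB).IsPrime :=
  Ideal.IsPrime.comap _

variable (hB : ∀ b : B, algebraMap B F b ∈ O)

theorem mem_valuationCenter {b : B} :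
    b ∈ valuationCenter hB ↔ O.valuation (algebraMap B F b) < 1 :=
  O.valuation_lt_one_iff _

theorem notMem_valuationCenter {b : B} :
    b ∉ valuationCenter hB ↔ O.valuation (algebraMap B F b) = 1 := by
  rw [mem_valuationCenter, not_lt]
  exact ⟨((O.valuation_le_one_iff _).mpr (hB b)).antisymm, Eq.ge⟩

theorem mem_of_valuationCenter_eq [IsIntegrallyClosedIn B F] {O' : ValuationSubring F}
    {hB' : ∀ b : B, algebraMap B F b ∈ O'} (h : valuationCenter hB = valuationCenter hB') {f : F}
    (hfO : f ∈ O) {p : B[X]} (hpf : aeval f p = 0) {i : ℕ} (hi : p.coeff i ∉ valuationCenter hB) :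
    f ∈ O' := by
  obtain ⟨a, b, hab, hf⟩ := exists_algebraMap_mul_eq_of_aeval_eq_zero hpf hi
  have ha : a ∉ valuationCenter hB := by
    intro ha
    refine (hab.resolve_left (not_not.mpr ha)) ((mem_valuationCenter hB).mpr ?_)
    rw [← hf, map_mul]
    exact (mul_le_of_le_one_right' ((O.valuation_le_one_iff f).mpr hfO)).trans_lt
      ((mem_valuationCenter hB).mp ha)
  rw [h, notMem_valuationCenter] at ha
  have hval := congrArg O'.valuation hf
  rw [map_mul, ha, one_mul] at hval
  rw [← O'.valuation_le_one_iff, hval, O'.valuation_le_one_iff]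
  exact hB' b

theorem exists_valuation_eq_one_and_forall_valuation_le {u : B}
    [IsArtinianRing (B ⧸ Ideal.span {u})] (hu : O.valuation (algebraMap B F u) < 1) :
    ∃ h : B, O.valuation (algebraMap B F h) = 1 ∧ ∀ (O' : ValuationSubring F)
      (hB' : ∀ b : B, algebraMap B F b ∈ O'), valuationCenter hB' ≠ valuationCenter hB →
        O'.valuation (algebraMap B F h) ≤ O'.valuation (algebraMap B F u) := by
  have huP : Ideal.span {u} ≤ valuationCenter hB :=
    (Ideal.span_singleton_le_iff_mem _).mpr ((mem_valuationCenter hB).mpr hu)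
  obtain ⟨h, hP, hidem, hQ⟩ := exists_notMem_mul_one_sub_mem huP
  refine ⟨h, (notMem_valuationCenter hB).mp hP, fun O' hB' hne => ?_⟩
  by_cases huQ : u ∈ valuationCenter hB'
  · have hh := hQ _ inferInstance ((Ideal.span_singleton_le_iff_mem _).mpr huQ) hne
    obtain ⟨b, hb⟩ := Ideal.mem_span_singleton.mp hidem
    have hunit : O'.valuation (algebraMap B F (1 - h)) = 1 := by
      rw [← notMem_valuationCenter hB']
      exact fun hmem => (valuationCenter_isPrime hB').one_notMem (by simpa using add_mem hmem hh)
    calc O'.valuation (algebraMap B F h) = O'.valuation (algebraMap B F (h * (1 - h))) := by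
          rw [map_mul, map_mul, hunit, mul_one]
      _ ≤ O'.valuation (algebraMap B F u) := by
          rw [hb, map_mul, map_mul]
          exact mul_le_of_le_one_right' ((O'.valuation_le_one_iff _).mpr (hB' b))
  · rw [(notMem_valuationCenter hB').mp huQ]
    exact (O'.valuation_le_one_iff _).mpr (hB' h)

end Center

section PolynomialCenter

variable {K B F : Type*} [Field K] [CommRing B] [Field F] [Algebra K F] [Algebra K[X] F]
  [IsScalarTower K K[X] F] [Algebra K[X] B] [Algebra B F] [IsScalarTower K[X] B F]
  {O O' : ValuationSubring F} {hB : ∀ b : B, algebraMap B F b ∈ O}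
  {hB' : ∀ b : B, algebraMap B F b ∈ O'}

theorem algebraMap_polynomial_mem (hK : ∀ c : K, algebraMap K F c ∈ O)
    (hX : algebraMap K[X] F X ∈ O) (p : K[X]) : algebraMap K[X] F p ∈ O := by
  rw [← aeval_X_left_apply p, ← aeval_algebraMap_apply, aeval_eq_sum_range]
  exact sum_mem fun i _ => by
    rw [Algebra.smul_def]
    exact mul_mem (hK _) (pow_mem hX i)

theorem algebraMap_notMem_valuationCenter (hX : algebraMap K[X] B X ∈ valuationCenter hB)
    {p : K[X]} (hp : ¬X ∣ p) : algebraMap K[X] B p ∉ valuationCenter hB := by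
  have hK (c : K) : algebraMap K F c ∈ O := by
    rw [IsScalarTower.algebraMap_apply K K[X] F, IsScalarTower.algebraMap_apply K[X] B F]
    exact hB _
  have := isTrivialOn_valuation hK
  rw [mem_valuationCenter, ← IsScalarTower.algebraMap_apply] at hX
  rw [notMem_valuationCenter, ← IsScalarTower.algebraMap_apply, ← aeval_X_left_apply p,
    ← aeval_algebraMap_apply]
  exact valuation_aeval_eq_one_of_not_X_dvd _ hX hp

variable [IsIntegrallyClosedIn B F] [FaithfulSMul K[X] F] [Algebra.IsAlgebraic K[X] F]

theorem le_of_valuationCenter_eq (hX : algebraMap K[X] B X ∈ valuationCenter hB)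
    (h : valuationCenter hB = valuationCenter hB') : O ≤ O' := by
  intro f hf
  obtain ⟨p, hpf, i, hi⟩ := exists_aeval_eq_zero_and_not_dvd_coeff not_isUnit_X
    (Algebra.IsAlgebraic.isAlgebraic (R := K[X]) f)
  refine mem_of_valuationCenter_eq hB h hf (p := p.map (algebraMap K[X] B)) (i := i) ?_ ?_
  · rwa [aeval_map_algebraMap]
  · rw [coeff_map]
    exact algebraMap_notMem_valuationCenter hX hi

theorem eq_of_valuationCenter_eq (hX : algebraMap K[X] B X ∈ valuationCenter hB)
    (h : valuationCenter hB = valuationCenter hB') : O = O' :=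
  (le_of_valuationCenter_eq hX h).antisymm (le_of_valuationCenter_eq (h ▸ hX) h.symm)

end PolynomialCenter

theorem isArtinianRing_quotient_span_X {K B : Type*} [Field K] [CommRing B] [Algebra K B]
    [Algebra K[X] B] [IsScalarTower K K[X] B] [Module.IsTorsionFree K[X] B]
    (h : Module.rank K[X] B < Cardinal.aleph0) :
    IsArtinianRing (B ⧸ Ideal.span {algebraMap K[X] B X}) := by
  let I := Ideal.span {algebraMap K[X] B X}
  have hI : LinearMap.range (Algebra.lsmul K K B (X : K[X])) = I.restrictScalars K := by
    ext b
    simp [I, Ideal.mem_span_singleton', Algebra.smul_def, mul_comm]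
  have hrank := (rank_quotient_range_lsmul_X_le (N := B) fun b hb => by simpa using hb).trans_lt h
  rw [hI, Module.rank_lt_aleph0_iff] at hrank
  have : FiniteDimensional K (B ⧸ I) := .equiv (Submodule.Quotient.restrictScalarsEquiv K I)
  exact isArtinian_of_tower K inferInstance

theorem exists_notMem_of_transcendental {K F : Type*} [Field K] [Field F] [Algebra K F] {u : F}
    (hu : Transcendental K u) :
    ∃ O : ValuationSubring F, (∀ c : K, algebraMap K F c ∈ O) ∧ u ∉ O := by
  by_contra! h
  exact hu (isIntegral_of_forall_mem h).isAlgebraic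

section Construction

variable {K B F : Type*} [Field K] [CommRing B] [Field F] [Algebra K F] [Algebra K[X] F]
  [IsScalarTower K K[X] F] [Algebra K[X] B] [Algebra B F] [IsScalarTower K[X] B F]
  {O₀ : ValuationSubring F}

theorem algebraMap_mem_of_isIntegral [Algebra.IsIntegral K[X] B] {O : ValuationSubring F}
    (hK : ∀ c : K, algebraMap K F c ∈ O) (hX : algebraMap K[X] F X ∈ O) (b : B) :
    algebraMap B F b ∈ O :=
  mem_of_isIntegral O (algebraMap_polynomial_mem hK hX) (Algebra.IsIntegral.isIntegral b).algebraMap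

variable [FaithfulSMul K[X] F]

theorem eq_zero_of_degree_lt_of_valuation_le (hK₀ : ∀ c : K, algebraMap K F c ∈ O₀)
    (hX₀ : O₀.valuation (algebraMap K[X] F X) < 1) {q : K[X]} {m : ℕ} (hq : q.degree < m)
    (h : O₀.valuation (algebraMap K[X] F q) ≤ O₀.valuation (algebraMap K[X] F X) ^ m) : q = 0 := by
  have := isTrivialOn_valuation hK₀
  have hX0 : algebraMap K[X] F X ≠ 0 :=
    (map_ne_zero_iff _ (FaithfulSMul.algebraMap_injective K[X] F)).mpr X_ne_zero
  refine eq_zero_of_dvd_of_degree_lt (X_pow_dvd_of_valuation_aeval_le O₀.valuation hX0 hX₀ ?_)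
    (by rwa [degree_X_pow])
  rwa [aeval_algebraMap_apply, aeval_X_left_apply]

variable [Algebra K B] [IsScalarTower K K[X] B] [Module.IsTorsionFree K[X] B]
  [Algebra.IsIntegral K[X] B]

theorem exists_sum_smul_ne_zero_and_add_smul_eq (hK₀ : ∀ c : K, algebraMap K F c ∈ O₀)
    (hX₀ : O₀.valuation (algebraMap K[X] F X) < 1) {n : ℕ} (hn : Module.rank K[X] B ≤ n)
    {ι : Type*} [Fintype ι] {b : ι → B} (hb : LinearIndependent K[X] b) {k m : ℕ}
    (hcard : m * n < Fintype.card ι * k + m) {h : B} (hh : O₀.valuation (algebraMap B F h) = 1) :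
    ∃ (p : ι → K[X]) (q : K[X]) (z : B), (∀ i, (p i).degree < k) ∧ ∑ i, p i • b i ≠ 0 ∧
      ∑ i, p i • b i + q • h ^ m = (X ^ m : K[X]) • z := by
  obtain ⟨p, q, z, hp, hq, hne, heq⟩ := exists_sum_smul_add_smul_eq_X_pow_smul hn
    (fun x hx => (smul_eq_zero_iff_right X_ne_zero).mp hx) b (h ^ m) hcard
  refine ⟨p, q, z, hp, fun hsum => ?_, heq⟩
  have hp0 : p = 0 := funext (Fintype.linearIndependent_iff.mp hb p hsum)
  refine hne.elim (· hp0) (· (eq_zero_of_degree_lt_of_valuation_le hK₀ hX₀ hq ?_))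
  have hqz : algebraMap K[X] F q * algebraMap B F h ^ m =
      algebraMap K[X] F X ^ m * algebraMap B F z := by
    rw [hsum, zero_add] at heq
    simpa [Algebra.smul_def, ← IsScalarTower.algebraMap_apply] using congrArg (algebraMap B F) heq
  have hz : O₀.valuation (algebraMap B F z) ≤ 1 := (O₀.valuation_le_one_iff _).mpr
    (algebraMap_mem_of_isIntegral hK₀ ((O₀.valuation_le_one_iff _).mp hX₀.le) z)
  calc O₀.valuation (algebraMap K[X] F q)
      = O₀.valuation (algebraMap K[X] F q * algebraMap B F h ^ m) := by
        rw [map_mul, map_pow, hh, one_pow, mul_one]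
    _ = O₀.valuation (algebraMap K[X] F X) ^ m * O₀.valuation (algebraMap B F z) := by
        rw [hqz, map_mul, map_pow]
    _ ≤ O₀.valuation (algebraMap K[X] F X) ^ m := mul_le_of_le_one_right' hz

variable [IsIntegrallyClosedIn B F] [Algebra.IsAlgebraic K[X] F]

theorem exists_valuation_eq_one_and_forall_ne_valuation_le
    (hK₀ : ∀ c : K, algebraMap K F c ∈ O₀) (hX₀ : O₀.valuation (algebraMap K[X] F X) < 1)
    (hrank : Module.rank K[X] B < Cardinal.aleph0) :
    ∃ h : B, O₀.valuation (algebraMap B F h) = 1 ∧ ∀ O : ValuationSubring F,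
      (∀ c : K, algebraMap K F c ∈ O) → algebraMap K[X] F X ∈ O → O ≠ O₀ →
        O.valuation (algebraMap B F h) ≤ O.valuation (algebraMap K[X] F X) := by
  have hB₀ (b : B) : algebraMap B F b ∈ O₀ :=
    algebraMap_mem_of_isIntegral hK₀ ((O₀.valuation_le_one_iff _).mp hX₀.le) b
  have := isArtinianRing_quotient_span_X hrank
  rw [IsScalarTower.algebraMap_apply K[X] B F] at hX₀ ⊢
  obtain ⟨h, hh₀, hh⟩ := exists_valuation_eq_one_and_forall_valuation_le hB₀ hX₀
  refine ⟨h, hh₀, fun O hK hX hne => hh O (algebraMap_mem_of_isIntegral hK ?_) fun heq => ?_⟩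
  · rwa [IsScalarTower.algebraMap_apply K[X] B F]
  · exact hne (eq_of_valuationCenter_eq ((mem_valuationCenter hB₀).mpr hX₀) heq.symm).symm

theorem exists_ne_zero_and_forall_ne_mem [FaithfulSMul B F] (hK₀ : ∀ c : K, algebraMap K F c ∈ O₀)
    (hX₀ : O₀.valuation (algebraMap K[X] F X) < 1)
    (hrank : Module.rank K[X] B < Cardinal.aleph0) :
    ∃ w : F, w ≠ 0 ∧ ∀ O : ValuationSubring F, (∀ c : K, algebraMap K F c ∈ O) →
      (algebraMap K[X] F X ∉ O → O.valuation w < 1) ∧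
      (algebraMap K[X] F X ∈ O → O ≠ O₀ → w ∈ O) := by
  obtain ⟨h, hh₀, hh⟩ := exists_valuation_eq_one_and_forall_ne_valuation_le hK₀ hX₀ hrank
  obtain ⟨n, hn⟩ := Cardinal.lt_aleph0.mp hrank
  obtain ⟨b, hb⟩ := Module.le_rank_iff.mp hn.ge
  obtain ⟨c, hc⟩ := exists_valuation_le_pow_of_isIntegral fun i =>
    (Algebra.IsIntegral.isIntegral (R := K[X]) (b i)).algebraMap (B := F)
  obtain ⟨k, hk⟩ : ∃ k, k = n * c + 1 := ⟨_, rfl⟩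
  obtain ⟨p, q, z, hp, hs0, heq⟩ := exists_sum_smul_ne_zero_and_add_smul_eq hK₀ hX₀ hn.le hb
    (k := k) (m := k + c) (by rw [Fintype.card_fin]; linarith) hh₀
  have hu0 : algebraMap K[X] F X ≠ 0 :=
    (map_ne_zero_iff _ (FaithfulSMul.algebraMap_injective K[X] F)).mpr X_ne_zero
  have hs : algebraMap B F (∑ i, p i • b i) = ∑ i, p i • algebraMap B F (b i) := by
    simp [Algebra.smul_def, ← IsScalarTower.algebraMap_apply]
  have heqF : algebraMap B F (∑ i, p i • b i) + algebraMap K[X] F q * algebraMap B F h ^ (k + c) =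
      algebraMap K[X] F X ^ (k + c) * algebraMap B F z := by
    simpa [Algebra.smul_def, ← IsScalarTower.algebraMap_apply] using congrArg (algebraMap B F) heq
  refine ⟨algebraMap B F (∑ i, p i • b i) / algebraMap K[X] F X ^ (k + c),
    div_ne_zero ?_ (pow_ne_zero _ hu0), fun O hK => ⟨fun hX => ?_, fun hX hne => ?_⟩⟩
  · exact (map_ne_zero_iff _ (FaithfulSMul.algebraMap_injective B F)).mpr hs0
  · have hX1 := zero_lt_one.trans (one_lt_valuation_of_notMem hX)
    rw [hs, map_div₀, map_pow, div_lt_one₀ (pow_pos hX1 _)]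
    exact valuation_sum_smul_lt hK hX hp (hc O hK hX)
  · have hdiv : algebraMap B F h / algebraMap K[X] F X ∈ O := by
      rw [← O.valuation_le_one_iff, map_div₀]
      exact div_le_one_of_le₀ (hh O hK hX hne) zero_le
    rw [eq_sub_of_add_eq heqF, sub_div, mul_div_cancel_left₀ _ (pow_ne_zero _ hu0), mul_div_assoc,
      ← div_pow]
    exact sub_mem (algebraMap_mem_of_isIntegral hK hX z)
      (mul_mem (algebraMap_polynomial_mem hK hX q) (pow_mem hdiv _))

theorem exists_forall_mem_iff_ne_of_rank_lt [FaithfulSMul B F]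
    (hK₀ : ∀ c : K, algebraMap K F c ∈ O₀) (hX₀ : O₀.valuation (algebraMap K[X] F X) < 1)
    (hrank : Module.rank K[X] B < Cardinal.aleph0) :
    ∃ w : F, ∀ O : ValuationSubring F, (∀ c : K, algebraMap K F c ∈ O) → (w ∈ O ↔ O ≠ O₀) := by
  obtain ⟨w, hw0, hw⟩ := exists_ne_zero_and_forall_ne_mem hK₀ hX₀ hrank
  have hwO {O : ValuationSubring F} (hK : ∀ c : K, algebraMap K F c ∈ O) (hne : O ≠ O₀) :
      w ∈ O := by
    by_cases hX : algebraMap K[X] F X ∈ O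
    · exact (hw O hK).2 hX hne
    · exact (O.valuation_le_one_iff w).mp ((hw O hK).1 hX).le
  refine ⟨w, fun O hK => ⟨?_, hwO hK⟩⟩
  rintro hwO₀ rfl
  have hint : IsIntegral K w := isIntegral_of_forall_mem fun O' hK' => by
    by_cases hne : O' = O
    · rwa [hne]
    · exact hwO hK' hne
  obtain ⟨O', hK', hX'⟩ := exists_notMem_of_transcendental <|
    (transcendental_algebraMap_iff (FaithfulSMul.algebraMap_injective K[X] F)).mpr
      (transcendental_X K)
  exact (inv_notMem_iff O').mpr ⟨hw0, (hw O' hK').1 hX'⟩ (mem_of_isIntegral O' hK' hint.inv)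

end Construction

section FunctionField

variable {K F : Type*} [Field K] [Field F] [Algebra K F]

theorem trdeg_adjoin_singleton_le_one (t : F) : Algebra.trdeg K (Algebra.adjoin K {t}) ≤ 1 := by
  let e := Subalgebra.equivOfEq _ _ (Algebra.adjoin_singleton_eq_range_aeval K t).symm
  simpa using lift_trdeg_le_of_surjective (e.toAlgHom.comp (aeval t).rangeRestrict)
    (e.surjective.comp (aeval (R := K) t).rangeRestrict_surjective)

open scoped IntermediateField.algebraAdjoinAdjoin in
theorem trdeg_le_one_of_finiteDimensional_adjoin_singleton {t : F}
    (h : FiniteDimensional (IntermediateField.adjoin K {t}) F) : Algebra.trdeg K F ≤ 1 := by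
  have : Algebra.IsAlgebraic (Algebra.adjoin K {t}) F :=
    .trans _ (IntermediateField.adjoin K {t}) _
  rw [← trdeg_add_eq K (Algebra.adjoin K {t}) (A := F), trdeg_eq_zero_iff.mpr this, add_zero]
  exact trdeg_adjoin_singleton_le_one t

theorem isAlgebraic_polynomial_of_trdeg_le_one [Algebra K[X] F] [IsScalarTower K K[X] F]
    [FaithfulSMul K[X] F] (h : Algebra.trdeg K F ≤ 1) : Algebra.IsAlgebraic K[X] F := by
  rw [← trdeg_eq_zero_iff, ← Cardinal.lift_eq_zero, ← nonpos_iff_eq_zero,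
    ← Cardinal.add_one_le_add_one_iff, zero_add, add_comm]
  calc _ = _ := by simpa using lift_trdeg_add_eq K K[X] F
    _ ≤ 1 := Cardinal.lift_le_one_iff.mpr h

theorem rank_polynomial_lt_aleph0 [Algebra K[X] F] [IsScalarTower K K[X] F]
    [FaithfulSMul K[X] F] [Algebra.EssFiniteType K F] [Algebra.IsAlgebraic K[X] F] :
    Module.rank K[X] F < Cardinal.aleph0 := by
  let _ : Algebra (FractionRing K[X]) F := FractionRing.liftAlgebra K[X] F
  have : Algebra.EssFiniteType K[X] F := .of_comp K K[X] F
  have : Algebra.EssFiniteType (FractionRing K[X]) F := .of_comp K[X] _ F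
  have : Algebra.IsAlgebraic (FractionRing K[X]) F :=
    (IsFractionRing.comap_isAlgebraic_iff (A := K[X])).mp ‹_›
  rw [← IsLocalization.rank_eq (FractionRing K[X]) (nonZeroDivisors K[X]) le_rfl,
    Module.rank_lt_aleph0_iff]
  exact Algebra.finite_of_essFiniteType_of_isAlgebraic

theorem essFiniteType_of_finiteDimensional_adjoin_singleton {t : F}
    (h : FiniteDimensional (IntermediateField.adjoin K {t}) F) : Algebra.EssFiniteType K F := by
  have : Algebra.EssFiniteType K (IntermediateField.adjoin K {t}) :=
    IntermediateField.essFiniteType_iff.mpr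
      (IntermediateField.fg_adjoin_of_finite (Set.finite_singleton t))
  exact .comp K (IntermediateField.adjoin K {t}) F

theorem exists_transcendental_valuation_lt_one {O : ValuationSubring F}
    (hK : ∀ c : K, algebraMap K F c ∈ O) (htop : O ≠ ⊤) :
    ∃ u : F, Transcendental K u ∧ O.valuation u < 1 := by
  obtain ⟨f, hf⟩ : ∃ f, f ∉ O := by
    by_contra! h
    exact htop (top_unique fun f _ => h f)
  have := isTrivialOn_valuation hK
  obtain ⟨hf0, hf1⟩ := (inv_notMem_iff O (x := f⁻¹)).mp (by rwa [inv_inv])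
  exact ⟨f⁻¹, Valuation.transcendental_of_ne_one K (v := O.valuation) _ hf0 hf1.ne, hf1⟩

theorem exists_forall_mem_iff_ne [Algebra.EssFiniteType K F] (htr : Algebra.trdeg K F ≤ 1)
    {O₀ : ValuationSubring F} (hK₀ : ∀ c : K, algebraMap K F c ∈ O₀) (htop : O₀ ≠ ⊤) :
    ∃ w : F, ∀ O : ValuationSubring F, (∀ c : K, algebraMap K F c ∈ O) → (w ∈ O ↔ O ≠ O₀) := by
  obtain ⟨u, hu, hu₀⟩ := exists_transcendental_valuation_lt_one hK₀ htop
  let _ : Algebra K[X] F := (aeval u).toAlgebra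
  have : IsScalarTower K K[X] F := .of_algebraMap_eq' (aeval u).comp_algebraMap.symm
  have : FaithfulSMul K[X] F :=
    (faithfulSMul_iff_algebraMap_injective K[X] F).mpr (transcendental_iff_injective.mp hu)
  have := isAlgebraic_polynomial_of_trdeg_le_one (K := K) (F := F) htr
  refine exists_forall_mem_iff_ne_of_rank_lt (B := integralClosure K[X] F) hK₀ ?_ ?_
  · rwa [show algebraMap K[X] F X = u from aeval_X u]
  · exact (Submodule.rank_le (Subalgebra.toSubmodule (integralClosure K[X] F))).trans_lt
      (rank_polynomial_lt_aleph0 (K := K))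

/-- Here `L` is the function field of an arbitrary curve covering the given one, and the left-hand
side of the equivalence says that the pullback of `x` to `L` vanishes at the place `O`. -/
theorem exists_good_cover_general [Algebra.EssFiniteType K F] (htr : Algebra.trdeg K F ≤ 1)
    (O₀ : ValuationSubring F) (hK₀ : ∀ c : K, algebraMap K F c ∈ O₀) (htop : O₀ ≠ ⊤) :
    ∃ x : F, x ≠ 0 ∧ ∀ (L : Type*) [Field L] [Algebra F L] [Algebra K L] [IsScalarTower K F L]
      (O : ValuationSubring L), (∀ c : K, algebraMap K L c ∈ O) →
        ((algebraMap F L x ∈ O ∧ (algebraMap F L x)⁻¹ ∉ O) ↔ O.comap (algebraMap F L) = O₀) := by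
  obtain ⟨w, hw⟩ := exists_forall_mem_iff_ne htr hK₀ htop
  have hw0 : w ≠ 0 := by
    rintro rfl
    exact (hw O₀ hK₀).mp O₀.zero_mem rfl
  refine ⟨w⁻¹, inv_ne_zero hw0, fun L _ _ _ _ O hK => ?_⟩
  have hwO : algebraMap F L w ∈ O ↔ O.comap (algebraMap F L) ≠ O₀ :=
    hw (O.comap (algebraMap F L)) fun c => by
      rw [ValuationSubring.mem_comap, ← IsScalarTower.algebraMap_apply]
      exact hK c
  rw [map_inv₀, inv_inv, hwO, not_not, and_iff_right_iff_imp]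
  exact fun h => (O.mem_or_inv_mem _).resolve_left fun hmem => hwO.mp hmem h

end FunctionField

/-- Existence of a "good cover": let `F` be the function field of a smooth projective curve
`S'` over a field `K` (a finitely generated extension of transcendence degree `1`), let
`O₀` be the place (valuation subring) of `F/K` corresponding to a `K`-rational point
`s₀ ∈ S'(K)`, and let `x ∈ F`. Then there is a finite cover `C' → S'` (a finite extension
`F'` of `F`) and a function `x' ∈ F'` whose zero divisor is supported exactly on the
preimages of `s₀`: `x'` vanishes at a place of `F'/K̄∩F'` if and only if that place lies
over `O₀`. -/
theorem exists_good_cover (K F : Type) [Field K] [Field F] [Algebra K F]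
    (t : F) (htr : Transcendental K t)
    (hfd : FiniteDimensional (↥(IntermediateField.adjoin K {t})) F)
    (x : F) (hx : x ≠ 0)
    (O₀ : ValuationSubring F) (hK : ∀ c : K, algebraMap K F c ∈ O₀) (htop : O₀ ≠ ⊤)
    -- `s₀` is a `K`-rational point: the residue field of `O₀` is `K`
    (hres : ∀ f ∈ O₀, ∃ c : K, f - algebraMap K F c = 0 ∨
      (f - algebraMap K F c ∈ O₀ ∧ (f - algebraMap K F c)⁻¹ ∉ O₀)) :
    ∃ F' : IntermediateField F (AlgebraicClosure F), FiniteDimensional F ↥F' ∧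
      ∃ x' : ↥F', x' ≠ 0 ∧
        ∀ O' : ValuationSubring ↥F',
          (∀ c : K, algebraMap K ↥F' c ∈ O') → O' ≠ ⊤ →
            ((x' ∈ O' ∧ x'⁻¹ ∉ O') ↔ O'.comap (algebraMap F ↥F') = O₀) := by
  have := essFiniteType_of_finiteDimensional_adjoin_singleton hfd
  obtain ⟨x', hx', h⟩ := exists_good_cover_general
    (trdeg_le_one_of_finiteDimensional_adjoin_singleton hfd) O₀ hK htop
  exact ⟨⊥, inferInstance, algebraMap F _ x', (map_ne_zero _).mpr hx', fun O' hO' _ => h _ O' hO'⟩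

end
end
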